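/- Let Ω ⊆ ℝⁿ (n ≥ 2) be a domain whose closure is an n-set and whose boundary ∂Ω is a d-set with n−1 < d < n, let 1 < p < ∞, 1 ≤ q < ∞ and s > (n−d)/p. Then there is a constant C such that: for every f ∈ L^p(Ω) for which there exists a sequence f_j ∈ C_c^∞(Ω) with ‖f − f_j‖_{F^s_{pq}(Ω)} → 0 (where ‖h‖_{F^s_{pq}(Ω)} := inf{ ‖g‖_{F^s_{pq}(ℝⁿ)} : g ∈ F^s_{pq}(ℝⁿ), g = h a.e. on Ω }), there exists g ∈ F^s_{pq}(ℝⁿ) with g = f a.e. on Ω, supp g ⊆ closure(Ω), and ‖g‖_{F^s_{pq}(ℝⁿ)} ≤ C ‖f‖_{F^s_{pq}(Ω)}. -/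

import Mathlib

open MeasureTheory Metric Set Filter
open scoped ENNReal NNReal Topology

noncomputable section

/-- ℝⁿ, with the sup-norm (given by the product metric on `Fin n → ℝ`). -/
abbrev Rn (n : ℕ) := Fin n → ℝ

/-- `S` is an (Ahlfors) `d`-set with regularity constant `C`. -/
def IsDSet {n : ℕ} (S : Set (Rn n)) (d C : ℝ) : Prop :=
  IsClosed S ∧ 1 < C ∧ ∀ w ∈ S, ∀ r : ℝ, 0 < r → r ≤ 1 →
    ENNReal.ofReal (C⁻¹ * r ^ d) ≤ μH[d] (closedBall w r ∩ S) ∧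
      μH[d] (closedBall w r ∩ S) ≤ ENNReal.ofReal (C * r ^ d)

/-- The normalized local best approximation `ℰ_k(f, Q(x,r))_{L^u}`. -/
def localApprox {n : ℕ} (k : ℕ) (u : ℝ) (f : Rn n → ℝ) (x : Rn n) (r : ℝ) : ℝ≥0∞ :=
  ⨅ (P : MvPolynomial (Fin n) ℝ) (_ : P.totalDegree ≤ k - 1),
    ((volume (closedBall x r))⁻¹ *
      ∫⁻ y in closedBall x r, ENNReal.ofReal |f y - MvPolynomial.eval y P| ^ u) ^ (1 / u)

/-- The Triebel–Lizorkin norm `‖f‖_{F^s_{pq}(ℝⁿ)}` (with `k = [s]+1`). -/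
def tlNorm {n : ℕ} (s p q : ℝ) (f : Rn n → ℝ) : ℝ≥0∞ :=
  (∫⁻ x, ENNReal.ofReal |f x| ^ p) ^ (1 / p) +
  (∫⁻ x, ((∫⁻ t in Set.Ioo (0:ℝ) 1,
      (ENNReal.ofReal (t ^ (-s)) * localApprox (⌊s⌋₊ + 1) 1 f x t) ^ q
        * ENNReal.ofReal t⁻¹) ^ (1 / q)) ^ p) ^ (1 / p)

/-- The quotient norm `‖h‖_{F^s_{pq}(Ω)} = inf {‖g‖_{F^s_{pq}(ℝⁿ)} : g = h a.e. on Ω}`. -/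
def tlNormOn {n : ℕ} (Ω : Set (Rn n)) (s p q : ℝ) (h : Rn n → ℝ) : ℝ≥0∞ :=
  ⨅ (g : Rn n → ℝ) (_ : Measurable g) (_ : ∀ᵐ x ∂volume.restrict Ω, g x = h x),
    tlNorm s p q g

/-!
Let `F` be any extension of a function compactly supported in `Ω`. The local approximation
functionals of `1_Ω F` and `F` differ only on cubes meeting `∂Ω`, where the difference is controlled
by averages of `F` over balls centred at points of `∂Ω`. Since `F` vanishes on `Ω` near `∂Ω` and `Ω`
is thick there, telescoping the polynomials of best approximation down to that scale bounds the
values of these polynomials on `∂Ω` by sums of local best approximations. Zero sets of polynomials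
have dimension at most `n - 1 < d`, so a compactness argument (a Markov inequality on the `d`-set
`∂Ω`) lets the values on `∂Ω` control the polynomials on whole cubes. As `s p > n - d`, a discrete
Hardy inequality sums these bounds over all scales, and since `∂Ω` is a `d`-set with `d < n`, the
resulting integrals over `∂Ω` are at most a constant times `‖F‖ ^ p`. Hence
`‖1_Ω F‖ ≤ C ‖F‖`; taking the infimum over the extensions `F` and then a limit, by Fatou's lemma,
gives the claim for `f`.
-/

/-- `μ` satisfies the upper `d`-regularity bound `μ(B(x, r)) ≤ K r^d` for all balls of radius at
most `ρ`, with centres anywhere in the space. -/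
def UpperRegular {X : Type*} [PseudoMetricSpace X] [MeasurableSpace X] (d : ℝ) (K : ℝ≥0∞) (ρ : ℝ)
    (μ : Measure X) : Prop :=
  ∀ x r, 0 < r → r ≤ ρ → μ (closedBall x r) ≤ K * ENNReal.ofReal (r ^ d)

/-- `μ` satisfies the lower `d`-regularity bound `r^d ≤ K μ(B(w, r))` for all balls of radius at
most `1` centred on `S`. With `d = n` and `μ` the restriction of Lebesgue measure to a set `Ω`,
it says that `Ω` is thick at the points of `S`. -/
def LowerRegularOn {X : Type*} [PseudoMetricSpace X] [MeasurableSpace X] (S : Set X) (d : ℝ)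
    (K : ℝ≥0∞) (μ : Measure X) : Prop :=
  ∀ w ∈ S, ∀ r : ℝ, 0 < r → r ≤ 1 → ENNReal.ofReal (r ^ d) ≤ K * μ (closedBall w r)

/-- `ν` is a measure carried by `Γ` with `ν(B(w, r))` comparable to `r^d`. The upper bound is
required of all small balls, also those centred off `Γ`. -/
structure AhlforsRegular {X : Type*} [PseudoMetricSpace X] [MeasurableSpace X] (Γ : Set X) (d : ℝ)
    (K : ℝ≥0∞) (ν : Measure X) : Prop where
  upper : UpperRegular d K (1 / 2) ν
  lower : LowerRegularOn Γ d K ν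
  ae_mem : ∀ᵐ w ∂ν, w ∈ Γ

section PolynomialZeros

lemma hasStrictFDerivAt_mvPolynomial_eval {𝕜 ι : Type*} [NontriviallyNormedField 𝕜] [Fintype ι]
    (P : MvPolynomial ι 𝕜) (x : ι → 𝕜) :
    HasStrictFDerivAt (fun y : ι → 𝕜 => MvPolynomial.eval y P)
      (∑ i, MvPolynomial.eval x (MvPolynomial.pderiv i P) •
        (ContinuousLinearMap.proj i : (ι → 𝕜) →L[𝕜] 𝕜)) x := by
  classical
  induction P using MvPolynomial.induction_on with
  | C a =>
    simp only [MvPolynomial.eval_C]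
    exact (hasStrictFDerivAt_const a x).congr_fderiv (by ext; simp)
  | add p q hp hq =>
    simp only [map_add]
    refine (hp.add hq).congr_fderiv ?_
    ext v
    simp [add_mul, Finset.sum_add_distrib]
  | mul_X p i hp =>
    simp only [map_mul, MvPolynomial.eval_X]
    have hi :=
      (ContinuousLinearMap.proj (R := 𝕜) (φ := fun _ : ι => 𝕜) i).hasStrictFDerivAt (x := x)
    refine (hp.mul hi).congr_fderiv ?_
    ext v
    simp [MvPolynomial.pderiv_X, Pi.single_apply, Finset.sum_add_distrib, Finset.mul_sum,
      add_mul, mul_assoc, apply_ite]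

lemma totalDegree_pderiv_le {R σ : Type*} [CommSemiring R] (P : MvPolynomial σ R) (i : σ) :
    (MvPolynomial.pderiv i P).totalDegree ≤ P.totalDegree - 1 := by
  refine Finset.sup_le fun m hm => ?_
  have hsupp : m + Finsupp.single i 1 ∈ P.support := by
    rw [MvPolynomial.mem_support_iff, MvPolynomial.coeff_pderiv] at hm
    exact MvPolynomial.mem_support_iff.2 (left_ne_zero_of_mul hm)
  have hle := MvPolynomial.le_totalDegree hsupp
  rw [Finsupp.sum_add_index' (by simp) (by simp), Finsupp.sum_single_index rfl] at hle
  exact Nat.le_sub_of_add_le hle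

lemma exists_pderiv_ne_zero {R σ : Type*} [CommSemiring R] [NoZeroDivisors R] [CharZero R]
    {P : MvPolynomial σ R} (h : 0 < P.totalDegree) : ∃ i, MvPolynomial.pderiv i P ≠ 0 := by
  obtain ⟨m, hm, i, hmi⟩ : ∃ m ∈ P.support, ∃ i, m i ≠ 0 := by
    by_contra! hcon
    refine h.ne' (Nat.le_zero.1 (Finset.sup_le fun m hm => ?_))
    simp [Finsupp.ext (hcon m hm) (g := 0)]
  refine ⟨i, fun h0 => ?_⟩
  have hcoeff := MvPolynomial.coeff_pderiv (i := i) P (m - Finsupp.single i 1)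
  rw [h0, tsub_add_cancel_of_le (Finsupp.single_le_iff.2 (Nat.one_le_iff_ne_zero.2 hmi))] at hcoeff
  exact mul_ne_zero (MvPolynomial.mem_support_iff.1 hm) (Nat.cast_add_one_ne_zero _) hcoeff.symm

/-- The implicit function theorem parametrizes the level set near a regular point by a Lipschitz
function on the kernel of the derivative. -/
lemma exists_mem_nhds_dimH_levelSet_inter_le {E F : Type*} [NormedAddCommGroup E] [NormedSpace ℝ E]
    [FiniteDimensional ℝ E] [NormedAddCommGroup F] [NormedSpace ℝ F] [FiniteDimensional ℝ F]
    {f : E → F} {f' : E →L[ℝ] F} {a : E} (hf : HasStrictFDerivAt f f' a) (hf' : f'.range = ⊤) :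
    ∃ U ∈ 𝓝 a, dimH (f ⁻¹' {f a} ∩ U) ≤ (Module.finrank ℝ E - Module.finrank ℝ F : ℕ) := by
  have : CompleteSpace E := FiniteDimensional.complete ℝ E
  obtain ⟨K, V, hV, hlip⟩ := (hf.to_implicitFunction hf').exists_lipschitzOnWith
  let π : E → f'.ker := fun x => (hf.implicitToOpenPartialHomeomorph f f' hf' x).2
  have hπa : π a = 0 := by simp [π]
  have hπ : ContinuousAt π a :=
    (((hf.implicitToOpenPartialHomeomorph f f' hf').continuousAt
      (hf.mem_implicitToOpenPartialHomeomorph_source hf')).snd)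
  refine ⟨_, inter_mem (hf.eq_implicitFunction hf') (hπ.preimage_mem_nhds (hπa ▸ hV)), ?_⟩
  have hsub : f ⁻¹' {f a} ∩ ({x | hf.implicitFunction f f' hf' (f x) (π x) = x} ∩ π ⁻¹' V) ⊆
      hf.implicitFunction f f' hf' (f a) '' V := by
    rintro x ⟨hxa, hx, hxV⟩
    exact ⟨π x, hxV, by rw [← mem_singleton_iff.1 hxa]; exact hx⟩
  have hker : Module.finrank ℝ f'.ker = Module.finrank ℝ E - Module.finrank ℝ F := by
    have := (f' : E →ₗ[ℝ] F).finrank_range_add_finrank_ker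
    rw [hf', finrank_top] at this
    omega
  calc dimH _ ≤ dimH V := (dimH_mono hsub).trans hlip.dimH_image_le
    _ ≤ dimH (univ : Set f'.ker) := dimH_mono (subset_univ _)
    _ = _ := by rw [Real.dimH_univ_eq_finrank, hker]

variable {ι : Type*} [Fintype ι]

lemma dimH_regular_zeros_le (P : MvPolynomial ι ℝ) (i : ι) :
    dimH {x | MvPolynomial.eval x P = 0 ∧ MvPolynomial.eval x (MvPolynomial.pderiv i P) ≠ 0} ≤
      (Fintype.card ι - 1 : ℕ) := by
  by_contra! hcon
  obtain ⟨a, ⟨ha, hai⟩, hlt⟩ := exists_mem_nhdsWithin_lt_dimH_of_lt_dimH hcon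
  have hsurj : (∑ j, MvPolynomial.eval a (MvPolynomial.pderiv j P) •
      (ContinuousLinearMap.proj j : (ι → ℝ) →L[ℝ] ℝ)).range = ⊤ := by
    classical
    refine LinearMap.range_eq_top.2 (LinearMap.surjective fun h0 => hai ?_)
    simpa [Pi.single_apply] using LinearMap.congr_fun h0 (Pi.single i 1)
  obtain ⟨U, hU, hdim⟩ := exists_mem_nhds_dimH_levelSet_inter_le
    (hasStrictFDerivAt_mvPolynomial_eval P a) hsurj
  refine (hlt _ (inter_mem self_mem_nhdsWithin (mem_nhdsWithin_of_mem_nhds hU))).not_ge ?_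
  refine (dimH_mono (inter_subset_inter_left U fun x hx => ?_)).trans (by simpa using hdim)
  exact hx.1.trans ha.symm

lemma dimH_zeros_le {P : MvPolynomial ι ℝ} (hP : P ≠ 0) :
    dimH {x | MvPolynomial.eval x P = 0} ≤ (Fintype.card ι - 1 : ℕ) := by
  induction h : P.totalDegree using Nat.strong_induction_on generalizing P with
  | _ k ih =>
    rcases Nat.eq_zero_or_pos P.totalDegree with hdeg | hdeg
    · obtain ⟨c, rfl⟩ : ∃ c, P = MvPolynomial.C c :=
        ⟨_, MvPolynomial.totalDegree_eq_zero_iff_eq_C.1 hdeg⟩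
      have hc : c ≠ 0 := fun h => hP (by simp [h])
      simp [hc]
    · obtain ⟨i, hi⟩ := exists_pderiv_ne_zero hdeg
      have hlt : (MvPolynomial.pderiv i P).totalDegree < k := by
        have := totalDegree_pderiv_le P i
        omega
      calc dimH {x | MvPolynomial.eval x P = 0}
          ≤ dimH ({x | MvPolynomial.eval x P = 0 ∧
              MvPolynomial.eval x (MvPolynomial.pderiv i P) ≠ 0} ∪
              {x | MvPolynomial.eval x (MvPolynomial.pderiv i P) = 0}) :=
            dimH_mono fun x hx => or_iff_not_imp_right.2 fun hxi => ⟨hx, hxi⟩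
        _ ≤ _ := (dimH_union _ _).trans_le (max_le (dimH_regular_zeros_le P i) (ih _ hlt hi rfl))

lemma hausdorffMeasure_zeros {d : ℝ} (hd : 0 < d) (hcard : (Fintype.card ι : ℝ) - 1 < d)
    {P : MvPolynomial ι ℝ} (hP : P ≠ 0) : μH[d] {x | MvPolynomial.eval x P = 0} = 0 := by
  lift d to ℝ≥0 using hd.le
  refine hausdorffMeasure_of_dimH_lt ((dimH_zeros_le hP).trans_lt ?_)
  rw [← ENNReal.coe_natCast, ENNReal.coe_lt_coe, ← NNReal.coe_lt_coe]
  rcases Nat.eq_zero_or_pos (Fintype.card ι) with h0 | h0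
  · simpa [h0] using hd
  · simpa only [NNReal.coe_natCast, Nat.cast_sub h0, Nat.cast_one] using hcard

end PolynomialZeros

section HausdorffCover

lemma exists_radius_rpow_le_add {d ρ : ℝ} (hd : 0 < d) {δ η : ℝ≥0∞} (hδ : δ < ENNReal.ofReal ρ)
    (hη : η ≠ 0) :
    ∃ r, 0 < r ∧ r ≤ ρ ∧ δ < ENNReal.ofReal r ∧ ENNReal.ofReal (r ^ d) ≤ δ ^ d + η := by
  have hlt : δ ^ d < δ ^ d + η :=
    ENNReal.lt_add_right (ENNReal.rpow_ne_top_of_nonneg hd.le hδ.ne_top) hη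
  have : (𝓝[>] δ).NeBot := nhdsGT_neBot_of_exists_gt ⟨_, hδ⟩
  obtain ⟨r, hr, hδr, hrρ⟩ := ((((ENNReal.continuous_rpow_const).tendsto δ).mono_left
    nhdsWithin_le_nhds).eventually_lt_const hlt |>.and (Ioo_mem_nhdsGT hδ)).exists
  lift r to ℝ≥0 using hrρ.ne_top
  refine ⟨r, ?_, ?_, by simpa using hδr, ?_⟩
  · exact_mod_cast pos_of_gt hδr
  · exact (Real.le_toNNReal_iff_coe_le' (ENNReal.coe_pos.1 (pos_of_gt hδr))).1
      (ENNReal.coe_le_coe.1 hrρ.le)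
  · rw [← ENNReal.ofReal_rpow_of_nonneg r.coe_nonneg hd.le]
    simpa using hr.le

variable {X : Type*} [MetricSpace X] [MeasurableSpace X] [BorelSpace X] {d ρ : ℝ}

lemma exists_countable_cover_of_hausdorffMeasure_eq_zero {Z : Set X} (hZ : μH[d] Z = 0)
    {δ ε : ℝ≥0∞} (hδ : 0 < δ) (hε : 0 < ε) :
    ∃ t : ℕ → Set X, Z ⊆ ⋃ k, t k ∧ (∀ k, ediam (t k) ≤ δ) ∧
      ∑' k, ⨆ _ : (t k).Nonempty, ediam (t k) ^ d < ε := by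
  have hlt : (⨅ (t : ℕ → Set X) (_ : Z ⊆ ⋃ k, t k) (_ : ∀ k, ediam (t k) ≤ δ),
      ∑' k, ⨆ _ : (t k).Nonempty, ediam (t k) ^ d) < ε := by
    refine lt_of_le_of_lt ?_ hε
    rw [← hZ, Measure.hausdorffMeasure_apply]
    exact le_iSup₂_of_le δ hδ le_rfl
  simpa only [iInf_lt_iff, exists_prop] using hlt

lemma exists_isOpen_superset_measure_le_of_hausdorffMeasure_eq_zero (hd : 0 < d) (hρ : 0 < ρ)
    {Z : Set X} (hZ : μH[d] Z = 0) {κ : ℝ≥0∞} (hκ : κ ≠ 0) :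
    ∃ U, IsOpen U ∧ Z ⊆ U ∧
      ∀ (K : ℝ≥0∞) (μ : Measure X), UpperRegular d K ρ μ → μ U ≤ K * κ := by
  have hκ2 : 0 < κ / 2 := by simpa [ENNReal.div_pos_iff] using hκ
  obtain ⟨δ, hδ, hδρ⟩ := exists_between (ENNReal.ofReal_pos.2 hρ)
  obtain ⟨t, hZt, htd, hsum⟩ := exists_countable_cover_of_hausdorffMeasure_eq_zero hZ hδ hκ2
  obtain ⟨η, hη, hηsum⟩ := ENNReal.exists_pos_sum_of_countable hκ2.ne' ℕ
  choose r hr0 hrρ htr hrη using fun k => exists_radius_rpow_le_add hd ((htd k).trans_lt hδρ)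
    (ENNReal.coe_ne_zero.2 (hη k).ne')
  refine ⟨⋃ k, ⋃ h : (t k).Nonempty, ball h.some (r k),
    isOpen_iUnion fun k => isOpen_iUnion fun _ => isOpen_ball, fun z hz => ?_, fun K μ hμ => ?_⟩
  · obtain ⟨k, hk⟩ := mem_iUnion.1 (hZt hz)
    refine mem_iUnion.2 ⟨k, mem_iUnion.2 ⟨⟨z, hk⟩, ?_⟩⟩
    rw [mem_ball, ← ENNReal.ofReal_lt_ofReal_iff (hr0 k), ← edist_dist]
    exact (edist_le_ediam_of_mem hk (Nonempty.some_mem _)).trans_lt (htr k)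
  · have hball : ∀ k, μ (⋃ h : (t k).Nonempty, ball h.some (r k)) ≤
        K * ((⨆ _ : (t k).Nonempty, ediam (t k) ^ d) + η k) := by
      intro k
      by_cases hk : (t k).Nonempty
      · simp only [hk, iUnion_true, iSup_pos]
        exact (measure_mono ball_subset_closedBall).trans
          ((hμ _ _ (hr0 k) (hrρ k)).trans (by gcongr; exact hrη k))
      · simp [hk]
    calc μ (⋃ k, ⋃ h : (t k).Nonempty, ball h.some (r k))
        ≤ ∑' k, K * ((⨆ _ : (t k).Nonempty, ediam (t k) ^ d) + η k) :=
          (measure_iUnion_le _).trans (ENNReal.tsum_le_tsum hball)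
      _ = K * ((∑' k, ⨆ _ : (t k).Nonempty, ediam (t k) ^ d) + ∑' k, (η k : ℝ≥0∞)) := by
        rw [ENNReal.tsum_mul_left, ENNReal.tsum_add]
      _ ≤ K * (κ / 2 + κ / 2) := by gcongr
      _ = K * κ := by rw [ENNReal.add_halves]

end HausdorffCover

section Markov

lemma exists_eventually_le_lintegral_enorm {B : Type*} [TopologicalSpace B] [CompactSpace B]
    [MeasurableSpace B] [OpensMeasurableSpace B] {f : C(B, ℝ)} {U : Set B} (hU : IsOpen U)
    (hfU : {x | f x = 0} ⊆ U) {c : ℝ≥0∞} (hc : c ≠ 0) :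
    ∃ η : ℝ≥0∞, η ≠ 0 ∧ ∀ᶠ g in 𝓝 f, ∀ μ : Measure B, c ≤ μ Uᶜ → η ≤ ∫⁻ x, ‖g x‖ₑ ∂μ := by
  obtain ⟨η, hη, hfη⟩ : ∃ η : ℝ, 0 < η ∧ ∀ x ∈ Uᶜ, 2 * η ≤ ‖f x‖ := by
    obtain ⟨ε, hε, hfε⟩ := hU.isClosed_compl.isCompact.exists_forall_le' (a := 0)
      f.continuous.norm.continuousOn fun x hx => norm_pos_iff.2 fun h0 => hx (hfU h0)
    exact ⟨ε / 2, half_pos hε, fun x hx => by linarith [hfε x hx]⟩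
  refine ⟨ENNReal.ofReal η * c, mul_ne_zero (by simpa using hη) hc, ?_⟩
  filter_upwards [ball_mem_nhds f hη] with g hg μ hμ
  have hgη : ∀ x ∈ Uᶜ, ENNReal.ofReal η ≤ ‖g x‖ₑ := by
    intro x hx
    rw [← ofReal_norm]
    refine ENNReal.ofReal_le_ofReal ?_
    have hclose : ‖g x - f x‖ ≤ ‖g - f‖ := (g - f).norm_coe_le_norm x
    have htri := norm_sub_norm_le (f x) (g x)
    rw [norm_sub_rev] at htri
    linarith [hfη x hx, mem_ball_iff_norm.1 hg]
  calc ENNReal.ofReal η * c ≤ ∫⁻ _ in Uᶜ, ENNReal.ofReal η ∂μ := by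
        rw [setLIntegral_const]; gcongr
    _ ≤ ∫⁻ x in Uᶜ, ‖g x‖ₑ ∂μ := setLIntegral_mono' hU.measurableSet.compl hgη
    _ ≤ ∫⁻ x, ‖g x‖ₑ ∂μ := setLIntegral_le_lintegral _ _

lemma exists_enorm_le_mul_lintegral {B : Type*} [TopologicalSpace B] [CompactSpace B]
    [MeasurableSpace B] [OpensMeasurableSpace B] (V : Submodule ℝ C(B, ℝ)) [FiniteDimensional ℝ V]
    {M : Set (Measure B)} {c : ℝ≥0∞} (hc : c ≠ 0)
    (hM : ∀ f ∈ V, f ≠ 0 → ∃ U, IsOpen U ∧ {x | f x = 0} ⊆ U ∧ ∀ μ ∈ M, c ≤ μ Uᶜ) :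
    ∃ C : ℝ≥0∞, C ≠ ∞ ∧ ∀ μ ∈ M, ∀ f ∈ V, ‖f‖ₑ ≤ C * ∫⁻ x, ‖f x‖ₑ ∂μ := by
  obtain ⟨η, hη, hsphere⟩ : ∃ η : ℝ≥0∞, η ≠ 0 ∧
      ∀ f ∈ sphere (0 : V) 1, ∀ μ ∈ M, η ≤ ∫⁻ x, ‖(f : C(B, ℝ)) x‖ₑ ∂μ := by
    refine (isCompact_sphere (0 : V) 1).induction_on ⟨1, by simp⟩
      (fun s t hst ⟨η, hη, h⟩ => ⟨η, hη, fun f hf => h f (hst hf)⟩) ?_ fun f hf => ?_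
    · rintro s t ⟨η, hη, h⟩ ⟨η', hη', h'⟩
      refine ⟨min η η', (lt_min hη.bot_lt hη'.bot_lt).ne', fun f hf μ hμ => ?_⟩
      exact hf.elim (fun hf => (min_le_left _ _).trans (h f hf μ hμ))
        fun hf => (min_le_right _ _).trans (h' f hf μ hμ)
    · have hf0 : (f : C(B, ℝ)) ≠ 0 := fun h0 => by simp [h0] at hf
      obtain ⟨U, hU, hfU, hμU⟩ := hM f f.2 hf0
      obtain ⟨η, hη, hnear⟩ := exists_eventually_le_lintegral_enorm hU hfU hc
      refine ⟨_, mem_nhdsWithin_of_mem_nhds (continuous_subtype_val.continuousAt hnear), η, hη, ?_⟩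
      exact fun g hg μ hμ => hg μ (hμU μ hμ)
  refine ⟨(min η 1)⁻¹, by simpa using hη, fun μ hμ f hf => ?_⟩
  rcases eq_or_ne f 0 with rfl | hf0
  · simp [← ofReal_norm]
  have hunit := hsphere (‖f‖⁻¹ • ⟨f, hf⟩) (by simp [norm_smul, hf0]) μ hμ
  have hnorm : ‖f‖ₑ ≠ 0 := by simpa [← ofReal_norm] using hf0
  simp only [Submodule.coe_smul, ContinuousMap.smul_apply, enorm_smul,
    enorm_inv (norm_ne_zero_iff.2 hf0), enorm_norm] at hunit
  rw [lintegral_const_mul' _ _ (by simpa using hnorm), mul_comm, ← div_eq_mul_inv,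
    ENNReal.le_div_iff_mul_le (.inl hnorm) (.inl (by simp [← ofReal_norm]))] at hunit
  rw [mul_comm, ← div_eq_mul_inv, ENNReal.le_div_iff_mul_le (.inl (by simpa using hη))
    (.inl (by simp)), mul_comm]
  exact (by gcongr; exact min_le_left _ _ : min η 1 * ‖f‖ₑ ≤ η * ‖f‖ₑ).trans hunit

lemma div_two_le_measure_diff {X : Type*} [MeasurableSpace X] {μ : Measure X} {B U : Set X}
    {K : ℝ≥0∞} (hB : 1 ≤ K * μ B) (hU : μ U ≤ K * (2 * (K * K))⁻¹) : 2⁻¹ / K ≤ μ (B \ U) := by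
  refine ENNReal.div_le_of_le_mul' ?_
  have hKU : K * μ U ≤ 2⁻¹ := by
    calc K * μ U ≤ 2⁻¹ * ((K * K) * (K * K)⁻¹) := by
          refine (mul_le_mul_right hU K).trans_eq ?_
          rw [ENNReal.mul_inv (by simp) (by simp)]
          ring
      _ ≤ 2⁻¹ := mul_le_of_le_one_right' (ENNReal.mul_inv_le_one _)
  have hsum : (2⁻¹ : ℝ≥0∞) + 2⁻¹ ≤ K * μ (B \ U) + 2⁻¹ := by
    rw [ENNReal.inv_two_add_inv_two]
    calc 1 ≤ K * μ ((B \ U) ∪ U) := hB.trans (by gcongr; simp)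
      _ ≤ K * (μ (B \ U) + μ U) := by gcongr; exact measure_union_le _ _
      _ ≤ K * μ (B \ U) + 2⁻¹ := by rw [mul_add]; gcongr
  exact (ENNReal.add_le_add_iff_right (by simp)).1 hsum

variable {ι : Type*} [Fintype ι]

/-- Restriction of polynomials of degree at most `m` to the closed unit ball; its finite-dimensional
range makes the compactness argument for the Markov inequality possible. -/
def unitBallRestrict (ι : Type*) [Fintype ι] (m : ℕ) :
    MvPolynomial.restrictTotalDegree ι ℝ m →ₗ[ℝ] C(closedBall (0 : ι → ℝ) 1, ℝ) where
  toFun P := ⟨fun y => MvPolynomial.eval (y : ι → ℝ) P.1,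
    (MvPolynomial.continuous_eval P.1).comp continuous_subtype_val⟩
  map_add' P Q := by ext; simp
  map_smul' a P := by ext; simp

/-- Zero sets of nonzero polynomials are null for `d`-dimensional measures when `d > n - 1`, so a
polynomial cannot be small on most of the support of such a measure. -/
lemma exists_enorm_eval_le_unitBall (m : ℕ) {d : ℝ} (hd : 0 < d)
    (hcard : (Fintype.card ι : ℝ) - 1 < d) {K : ℝ≥0∞} (hK : K ≠ ∞) :
    ∃ C : ℝ≥0∞, C ≠ ∞ ∧ ∀ μ : Measure (ι → ℝ), UpperRegular d K 1 μ → 1 ≤ K * μ (closedBall 0 1) →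
      ∀ P : MvPolynomial ι ℝ, P.totalDegree ≤ m → ∀ y ∈ closedBall (0 : ι → ℝ) 1,
        ‖MvPolynomial.eval y P‖ₑ ≤
          C * ∫⁻ z in closedBall (0 : ι → ℝ) 1, ‖MvPolynomial.eval z P‖ₑ ∂μ := by
  set B := closedBall (0 : ι → ℝ) 1
  have hBm : MeasurableSet B := measurableSet_closedBall
  have : CompactSpace B := isCompact_iff_compactSpace.1 (isCompact_closedBall _ _)
  obtain ⟨C, hC, hmain⟩ := exists_enorm_le_mul_lintegral (LinearMap.range (unitBallRestrict ι m))
    (M := (Measure.comap (Subtype.val : B → ι → ℝ)) ''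
      {μ | UpperRegular d K 1 μ ∧ 1 ≤ K * μ B}) (c := 2⁻¹ / K) (by simp [hK]) (by
    rintro _ ⟨P, rfl⟩ hP
    have hP0 : P.1 ≠ 0 := fun h0 => hP (by rw [show P = 0 from Subtype.ext h0, map_zero])
    obtain ⟨U, hU, hPU, hμU⟩ := exists_isOpen_superset_measure_le_of_hausdorffMeasure_eq_zero hd
      one_pos (hausdorffMeasure_zeros hd hcard hP0) (κ := (2 * (K * K))⁻¹)
      (by simp [ENNReal.mul_eq_top, hK])
    refine ⟨Subtype.val ⁻¹' U, hU.preimage continuous_subtype_val, fun x hx => hPU hx, ?_⟩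
    rintro _ ⟨μ, ⟨hμ, hμB⟩, rfl⟩
    rw [(MeasurableEmbedding.subtype_coe hBm).comap_apply, ← preimage_compl,
      Subtype.image_preimage_coe, ← Set.sdiff_eq]
    exact div_two_le_measure_diff hμB (hμU K μ hμ))
  refine ⟨C, hC, fun μ hμ hμB P hP y hy => ?_⟩
  let Q : MvPolynomial.restrictTotalDegree ι ℝ m :=
    ⟨P, (MvPolynomial.mem_restrictTotalDegree _ _ _).2 hP⟩
  calc ‖MvPolynomial.eval y P‖ₑ ≤ ‖unitBallRestrict ι m Q‖ₑ :=
        enorm_le_iff_norm_le.2 ((unitBallRestrict ι m Q).norm_coe_le_norm ⟨y, hy⟩)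
    _ ≤ _ := hmain _ ⟨μ, ⟨hμ, hμB⟩, rfl⟩ _ ⟨Q, rfl⟩
    _ = _ := by rw [← lintegral_subtype_comap hBm fun z => ‖MvPolynomial.eval z P‖ₑ]; rfl

lemma totalDegree_bind₁_le {R σ τ : Type*} [CommSemiring R] (P : MvPolynomial σ R)
    {f : σ → MvPolynomial τ R} (hf : ∀ i, (f i).totalDegree ≤ 1) :
    (MvPolynomial.bind₁ f P).totalDegree ≤ P.totalDegree := by
  rw [MvPolynomial.bind₁, MvPolynomial.aeval_def, MvPolynomial.eval₂_eq]
  refine MvPolynomial.totalDegree_finsetSum_le fun m hm => ?_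
  calc _ ≤ (MvPolynomial.C (MvPolynomial.coeff m P)).totalDegree +
        (∏ i ∈ m.support, f i ^ m i).totalDegree := MvPolynomial.totalDegree_mul _ _
    _ ≤ 0 + ∑ i ∈ m.support, m i := by
      gcongr
      · rw [MvPolynomial.totalDegree_C]
      · refine (MvPolynomial.totalDegree_finsetProd _ _).trans (Finset.sum_le_sum fun i _ => ?_)
        exact (MvPolynomial.totalDegree_pow _ _).trans (mul_le_of_le_one_right' (hf i))
    _ ≤ P.totalDegree := by simpa using! MvPolynomial.le_totalDegree hm

lemma exists_eval_eq_eval_add_smul {R σ : Type*} [CommSemiring R] [Nontrivial R]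
    (P : MvPolynomial σ R) (w : σ → R) (t : R) :
    ∃ Q : MvPolynomial σ R, Q.totalDegree ≤ P.totalDegree ∧
      ∀ y, MvPolynomial.eval y Q = MvPolynomial.eval (w + t • y) P := by
  refine ⟨MvPolynomial.bind₁
    (fun i => MvPolynomial.C (w i) + MvPolynomial.C t * MvPolynomial.X i) P,
    totalDegree_bind₁_le P fun i => ?_, fun y => ?_⟩
  · refine (MvPolynomial.totalDegree_add _ _).trans (max_le (by simp) ?_)
    refine (MvPolynomial.totalDegree_mul _ _).trans ?_
    simp [MvPolynomial.totalDegree_X]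
  · rw [MvPolynomial.eval, MvPolynomial.eval₂Hom_bind₁]
    simp [Pi.add_def]

lemma preimage_smul_sub_closedBall {E : Type*} [NormedAddCommGroup E] [NormedSpace ℝ E] (w x : E)
    {t : ℝ} (ht : 0 < t) (r : ℝ) :
    (fun z => t⁻¹ • (z - w)) ⁻¹' closedBall x r = closedBall (w + t • x) (t * r) := by
  ext z
  have : z - (w + t • x) = t • (t⁻¹ • (z - w) - x) := by
    rw [smul_sub, smul_inv_smul₀ ht.ne', sub_sub]
  rw [mem_preimage, mem_closedBall, mem_closedBall, dist_eq_norm, dist_eq_norm, this, norm_smul,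
    Real.norm_of_nonneg ht.le, mul_le_mul_iff_right₀ ht]

lemma UpperRegular.smul_map_dilation {E : Type*} [NormedAddCommGroup E] [NormedSpace ℝ E]
    [MeasurableSpace E] [BorelSpace E] {d t : ℝ} {K : ℝ≥0∞} {μ : Measure E}
    (hμ : UpperRegular d K t μ) (ht : 0 < t) (w : E) :
    UpperRegular d K 1 ((ENNReal.ofReal (t ^ d))⁻¹ • μ.map fun z => t⁻¹ • (z - w)) := by
  intro x r hr hr1
  have htd : 0 < t ^ d := Real.rpow_pos_of_pos ht d
  rw [Measure.smul_apply, smul_eq_mul, Measure.map_apply (by fun_prop) measurableSet_closedBall,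
    preimage_smul_sub_closedBall w x ht]
  calc (ENNReal.ofReal (t ^ d))⁻¹ * μ (closedBall (w + t • x) (t * r))
      ≤ (ENNReal.ofReal (t ^ d))⁻¹ * (K * ENNReal.ofReal ((t * r) ^ d)) := by
        gcongr
        exact hμ _ _ (by positivity) (mul_le_of_le_one_right ht.le hr1)
    _ = (ENNReal.ofReal (t ^ d))⁻¹ * ENNReal.ofReal (t ^ d) * (K * ENNReal.ofReal (r ^ d)) := by
      rw [Real.mul_rpow ht.le hr.le, ENNReal.ofReal_mul htd.le]
      ring
    _ ≤ K * ENNReal.ofReal (r ^ d) := mul_le_of_le_one_left' (ENNReal.inv_mul_le_one _)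

lemma exists_enorm_eval_le (ι : Type*) [Fintype ι] (m : ℕ) {d : ℝ} (hd : 0 < d)
    (hcard : (Fintype.card ι : ℝ) - 1 < d) {K : ℝ≥0∞} (hK : K ≠ ∞) :
    ∃ C : ℝ≥0∞, C ≠ ∞ ∧ ∀ (μ : Measure (ι → ℝ)) (w : ι → ℝ) (t : ℝ), 0 < t →
      UpperRegular d K t μ → ENNReal.ofReal (t ^ d) ≤ K * μ (closedBall w t) →
      ∀ P : MvPolynomial ι ℝ, P.totalDegree ≤ m → ∀ y ∈ closedBall w t,
        ‖MvPolynomial.eval y P‖ₑ ≤ C * ((ENNReal.ofReal (t ^ d))⁻¹ *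
          ∫⁻ z in closedBall w t, ‖MvPolynomial.eval z P‖ₑ ∂μ) := by
  obtain ⟨C, hC, hunit⟩ := exists_enorm_eval_le_unitBall (ι := ι) m hd hcard hK
  refine ⟨C, hC, fun μ w t ht hμ hμw P hP y hy => ?_⟩
  set h : (ι → ℝ) → ι → ℝ := fun z => t⁻¹ • (z - w)
  have hm : Measurable h := by fun_prop
  have hball : h ⁻¹' closedBall 0 1 = closedBall w t := by
    simpa using preimage_smul_sub_closedBall w 0 ht 1
  obtain ⟨Q, hQ, heval⟩ := exists_eval_eq_eval_add_smul P w t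
  have hQh : ∀ z, MvPolynomial.eval (h z) Q = MvPolynomial.eval z P := fun z => by
    rw [heval, smul_inv_smul₀ ht.ne', add_sub_cancel]
  have hmass : 1 ≤ K * ((ENNReal.ofReal (t ^ d))⁻¹ • μ.map h) (closedBall 0 1) := by
    rw [Measure.smul_apply, smul_eq_mul, Measure.map_apply hm measurableSet_closedBall, hball,
      mul_left_comm, ← ENNReal.inv_mul_cancel (a := ENNReal.ofReal (t ^ d))
        (by simpa using Real.rpow_pos_of_pos ht d) ENNReal.ofReal_ne_top]
    gcongr
  have hmarkov := hunit _ (hμ.smul_map_dilation ht w) hmass Q (hQ.trans hP) (h y)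
    (by rwa [← mem_preimage, hball])
  rwa [hQh, Measure.restrict_smul, lintegral_smul_measure, smul_eq_mul,
    setLIntegral_map measurableSet_closedBall (MvPolynomial.continuous_eval Q).enorm.measurable hm,
    hball, lintegral_congr fun z => by rw [hQh]] at hmarkov

end Markov
section LocalApproximation

variable {n m : ℕ} {F G : Rn n → ℝ} {x y : Rn n} {t r : ℝ}

/-- The mean of `|F|` over the cube `Q(x, t)`. -/
def ballMean (F : Rn n → ℝ) (x : Rn n) (t : ℝ) : ℝ≥0∞ :=
  ⨍⁻ y in closedBall x t, ‖F y‖ₑ ∂volume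

/-- The `L¹` local best approximation `ℰ_{m+1}(F, Q(x, t))`, indexed by the maximal degree `m` of
the approximating polynomials. -/
def bestApprox (m : ℕ) (F : Rn n → ℝ) (x : Rn n) (t : ℝ) : ℝ≥0∞ :=
  ⨅ (P : MvPolynomial (Fin n) ℝ) (_ : P.totalDegree ≤ m),
    ballMean (fun y => F y - MvPolynomial.eval y P) x t

/-- The function `g` whose `L^p` norm is the smoothness part of the Triebel–Lizorkin norm. -/
def smoothnessFn (m : ℕ) (s q : ℝ) (F : Rn n → ℝ) (x : Rn n) : ℝ≥0∞ :=
  (∫⁻ t in Ioo (0 : ℝ) 1, (ENNReal.ofReal (t ^ (-s)) * bestApprox m F x t) ^ q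
    * ENNReal.ofReal t⁻¹) ^ (1 / q)

lemma ballMean_eq (F : Rn n → ℝ) (x : Rn n) (t : ℝ) :
    ballMean F x t = (volume (closedBall x t))⁻¹ * ∫⁻ y in closedBall x t, ‖F y‖ₑ := by
  rw [ballMean, setLAverage_eq, div_eq_mul_inv, mul_comm]

lemma localApprox_succ_one (m : ℕ) (F : Rn n → ℝ) (x : Rn n) (t : ℝ) :
    localApprox (m + 1) 1 F x t = bestApprox m F x t := by
  simp [localApprox, bestApprox, ballMean_eq, Real.enorm_eq_ofReal_abs]

lemma tlNorm_eq (s p q : ℝ) (F : Rn n → ℝ) :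
    tlNorm s p q F =
      (∫⁻ x, ‖F x‖ₑ ^ p) ^ (1 / p) + (∫⁻ x, smoothnessFn ⌊s⌋₊ s q F x ^ p) ^ (1 / p) := by
  simp [tlNorm, smoothnessFn, localApprox_succ_one, Real.enorm_eq_ofReal_abs]

lemma volume_closedBall_eq (x : Rn n) (ht : 0 ≤ t) :
    volume (closedBall x t) = ENNReal.ofReal ((2 * t) ^ n) := by
  rw [Real.volume_pi_closedBall x ht, Fintype.card_fin]

lemma ballMean_congr_ae (h : ∀ᵐ y ∂volume.restrict (closedBall x t), F y = G y) :
    ballMean F x t = ballMean G x t :=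
  laverage_congr (h.mono fun _ => congrArg enorm)

lemma bestApprox_congr_ae (h : ∀ᵐ y ∂volume.restrict (closedBall x t), F y = G y) :
    bestApprox m F x t = bestApprox m G x t :=
  iInf_congr fun _ => iInf_congr fun _ => ballMean_congr_ae (h.mono fun y hy => by rw [hy])

lemma tlNorm_congr_ae {s p q : ℝ} (h : ∀ᵐ y, F y = G y) : tlNorm s p q F = tlNorm s p q G := by
  simp only [tlNorm_eq, smoothnessFn, bestApprox_congr_ae (ae_restrict_of_ae h)]
  rw [lintegral_congr_ae (g := fun y => ‖G y‖ₑ ^ p) (h.mono fun y hy => by simp only [hy])]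

lemma ballMean_sub_comm (F G : Rn n → ℝ) (x : Rn n) (t : ℝ) :
    ballMean (F - G) x t = ballMean (G - F) x t := by
  simp only [ballMean, Pi.sub_apply, enorm_sub_rev (F _)]

lemma ballMean_add_le (hF : Measurable F) :
    ballMean (F + G) x t ≤ ballMean F x t + ballMean G x t := by
  simp only [ballMean_eq, ← mul_add]
  rw [← lintegral_add_left hF.enorm]
  gcongr
  exact enorm_add_le _ _

lemma ballMean_sub_le (hF : Measurable F) :
    ballMean (F - G) x t ≤ ballMean F x t + ballMean G x t := by
  simp only [ballMean_eq, ← mul_add]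
  rw [← lintegral_add_left hF.enorm]
  gcongr
  exact enorm_sub_le

lemma ballMean_mono {c : ℝ} (ht : 0 < t) (hsub : dist x y + t ≤ r) (hrt : r ≤ c * t) :
    ballMean F x t ≤ ENNReal.ofReal (c ^ n) * ballMean F y r := by
  have hr : 0 < r := ht.trans_le ((le_add_of_nonneg_left dist_nonneg).trans hsub)
  simp only [ballMean_eq, ← mul_assoc]
  have hvol : (volume (closedBall x t))⁻¹ ≤
      ENNReal.ofReal (c ^ n) * (volume (closedBall y r))⁻¹ := by
    have hy := (measure_closedBall_pos volume y hr).ne'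
    rw [ENNReal.inv_le_iff_inv_le, ENNReal.mul_inv (.inr (ENNReal.inv_ne_top.2 hy))
      (.inl ENNReal.ofReal_ne_top), inv_inv, mul_comm, ← div_eq_mul_inv]
    refine ENNReal.div_le_of_le_mul ?_
    rw [volume_closedBall_eq _ ht.le, volume_closedBall_eq _ hr.le,
      ← ENNReal.ofReal_mul (by positivity), ← mul_pow]
    exact ENNReal.ofReal_le_ofReal (pow_le_pow_left₀ (by positivity) (by linarith) n)
  gcongr
  exact closedBall_subset_closedBall' (by linarith)

lemma ballMean_ne_top_of_continuous (hF : Continuous F) (x : Rn n) (t : ℝ) : ballMean F x t ≠ ∞ :=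
  (laverage_lt_top ((hF.continuousOn.integrableOn_compact (isCompact_closedBall x t)).2.ne)).ne

lemma bestApprox_le {P : MvPolynomial (Fin n) ℝ} (hP : P.totalDegree ≤ m) :
    bestApprox m F x t ≤ ballMean (fun y => F y - MvPolynomial.eval y P) x t :=
  iInf₂_le P hP

lemma bestApprox_le_ballMean : bestApprox m F x t ≤ ballMean F x t := by
  simpa using bestApprox_le (m := m) (F := F) (P := 0) (by simp)

lemma le_add_mul_bestApprox {X a b : ℝ≥0∞} (hb : b ≠ ∞)
    (h : ∀ P : MvPolynomial (Fin n) ℝ, P.totalDegree ≤ m →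
      X ≤ a + b * ballMean (fun y => F y - MvPolynomial.eval y P) x t) :
    X ≤ a + b * bestApprox m F x t := by
  rcases eq_or_ne b 0 with rfl | hb0
  · simpa using h 0 (by simp)
  · rw [← tsub_le_iff_left, ← ENNReal.inv_mul_le_iff hb0 hb]
    refine le_iInf₂ fun P hP => ?_
    rw [ENNReal.inv_mul_le_iff hb0 hb, tsub_le_iff_left]
    exact h P hP

lemma bestApprox_mono {c : ℝ} (ht : 0 < t) (hsub : dist x y + t ≤ r)
    (hrt : r ≤ c * t) : bestApprox m F x t ≤ ENNReal.ofReal (c ^ n) * bestApprox m F y r := by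
  rw [← zero_add (_ * bestApprox m F y r)]
  refine le_add_mul_bestApprox ENNReal.ofReal_ne_top fun P hP => ?_
  rw [zero_add]
  exact (bestApprox_le hP).trans (ballMean_mono ht hsub hrt)

lemma bestApprox_sub_le (hF : Measurable F) :
    bestApprox m (F - G) x t ≤ bestApprox m F x t + bestApprox m G x t := by
  rw [← one_mul (bestApprox m G x t)]
  refine le_add_mul_bestApprox ENNReal.one_ne_top fun Q hQ => ?_
  rw [add_comm, ← one_mul (bestApprox m F x t)]
  refine le_add_mul_bestApprox ENNReal.one_ne_top fun P hP => ?_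
  rw [one_mul, one_mul, add_comm]
  refine (bestApprox_le ((MvPolynomial.totalDegree_sub P Q).trans (max_le hP hQ))).trans ?_
  have hsplit : (fun y => (F - G) y - MvPolynomial.eval y (P - Q)) =
      (fun y => F y - MvPolynomial.eval y P) - fun y => G y - MvPolynomial.eval y Q := by
    ext y
    simp [sub_sub_sub_comm]
  rw [hsplit]
  exact ballMean_sub_le (hF.sub (MvPolynomial.continuous_eval P).measurable)

lemma bestApprox_le_add_ballMean_sub (hG : Measurable G) :
    bestApprox m F x t ≤ bestApprox m G x t + ballMean (F - G) x t := by
  calc bestApprox m F x t = bestApprox m (G - (G - F)) x t := by rw [sub_sub_cancel]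
    _ ≤ bestApprox m G x t + bestApprox m (G - F) x t := bestApprox_sub_le hG
    _ ≤ bestApprox m G x t + ballMean (F - G) x t := by
      rw [ballMean_sub_comm]
      gcongr
      exact bestApprox_le_ballMean

end LocalApproximation

section Measurability

lemma measurable_setLIntegral_closedBall {X : Type*} [PseudoMetricSpace X] [MeasurableSpace X]
    [OpensMeasurableSpace X] [SecondCountableTopology X] (ν : Measure X) [SFinite ν] {g : X → ℝ≥0∞}
    (hg : Measurable g) : Measurable fun z : X × ℝ => ∫⁻ y in closedBall z.1 z.2, g y ∂ν := by
  have hball : MeasurableSet {w : (X × ℝ) × X | dist w.2 w.1.1 ≤ w.1.2} :=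
    measurableSet_le (by fun_prop) (by fun_prop)
  simp_rw [← lintegral_indicator measurableSet_closedBall]
  exact ((hg.comp measurable_snd).indicator hball).lintegral_prod_right'

variable {n m : ℕ} {F : Rn n → ℝ}

lemma measurable_ballMean (hF : Measurable F) :
    Measurable fun z : Rn n × ℝ => ballMean F z.1 z.2 := by
  simp_rw [ballMean_eq, ← setLIntegral_one (closedBall _ _)]
  exact (measurable_setLIntegral_closedBall volume measurable_const).inv.mul
    (measurable_setLIntegral_closedBall volume hF.enorm)

lemma measurable_ballMean_left (hF : Measurable F) (t : ℝ) : Measurable fun x => ballMean F x t :=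
  Measurable.of_uncurry_right (f := ballMean F) (measurable_ballMean hF)

lemma ballMean_sum_mul_le {ι : Type*} [Fintype ι] {e : ι → Rn n → ℝ} (he : ∀ i, Measurable (e i))
    (c : ι → ℝ) (x : Rn n) (t : ℝ) :
    ballMean (fun y => ∑ i, c i * e i y) x t ≤ ∑ i, ‖c i‖ₑ * ballMean (e i) x t := by
  simp only [ballMean_eq, mul_left_comm (‖c _‖ₑ), ← Finset.mul_sum]
  gcongr
  simp_rw [← lintegral_const_mul _ (he _).enorm]
  rw [← lintegral_finsetSum _ fun i _ => (he i).enorm.const_mul _]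
  gcongr
  exact (enorm_sum_le _ _).trans (by simp [enorm_mul])

lemma iInf_mem_ballMean_sub_sum_le {ι : Type*} [Fintype ι] {e : ι → Rn n → ℝ}
    (he : ∀ i, Continuous (e i)) (hF : Measurable F) {D : Set (ι → ℝ)} (hD : Dense D) (c : ι → ℝ)
    (x : Rn n) (t : ℝ) :
    ⨅ c' ∈ D, ballMean (fun y => F y - ∑ i, c' i * e i y) x t ≤
      ballMean (fun y => F y - ∑ i, c i * e i y) x t := by
  -- Unlike the left-hand side, `R c'` is clearly continuous in `c'` even if `F` is not integrable.
  let R (c' : ι → ℝ) : ℝ≥0∞ := ballMean (fun y => F y - ∑ i, c i * e i y) x t +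
    ∑ i, ‖c i - c' i‖ₑ * ballMean (e i) x t
  have hle (c' : ι → ℝ) : ballMean (fun y => F y - ∑ i, c' i * e i y) x t ≤ R c' := by
    have hsplit : (fun y => F y - ∑ i, c' i * e i y) =
        (fun y => F y - ∑ i, c i * e i y) + fun y => ∑ i, (c i - c' i) * e i y := by
      ext y
      simp [sub_mul, Finset.sum_sub_distrib]
    rw [hsplit]
    refine (ballMean_add_le (by fun_prop)).trans ?_
    refine add_le_add_right ?_ _
    exact ballMean_sum_mul_le (fun i => (he i).measurable) _ x t
  have hR : Continuous R := by
    refine continuous_const.add (continuous_finsetSum _ fun i _ => ?_)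
    exact (ENNReal.continuous_mul_const
      (ballMean_ne_top_of_continuous (he i) x t)).comp (by fun_prop)
  calc ⨅ c' ∈ D, ballMean (fun y => F y - ∑ i, c' i * e i y) x t
    _ ≤ ⨅ c' ∈ D, R c' := iInf₂_mono fun c' _ => hle c'
    _ = ⨅ c', R c' := by rw [← iInf_subtype'', hD.ciInf' hR]
    _ ≤ R c := iInf_le R c
    _ = ballMean (fun y => F y - ∑ i, c i * e i y) x t := by simp [R]

lemma exists_countable_forall_bestApprox_eq (n m : ℕ) :
    ∃ S : Set (MvPolynomial (Fin n) ℝ), S.Countable ∧ ∀ F : Rn n → ℝ, Measurable F → ∀ x t,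
      bestApprox m F x t = ⨅ P ∈ S, ballMean (fun y => F y - MvPolynomial.eval y P) x t := by
  let b := Module.finBasis ℝ (MvPolynomial.restrictTotalDegree (Fin n) ℝ m)
  have hb (c) (y : Rn n) : MvPolynomial.eval y (b.equivFun.symm c).1 =
      ∑ i, c i * MvPolynomial.eval y (b i).1 := by
    simp [Module.Basis.equivFun_symm_apply]
  obtain ⟨D, hDc, hD⟩ := TopologicalSpace.exists_countable_dense
    (Fin (Module.finrank ℝ (MvPolynomial.restrictTotalDegree (Fin n) ℝ m)) → ℝ)
  refine ⟨(fun c => (b.equivFun.symm c).1) '' D, hDc.image _, fun F hF x t => ?_⟩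
  rw [iInf_image]
  refine le_antisymm (le_iInf₂ fun c _ => ?_) (le_iInf₂ fun P hP => ?_)
  · exact bestApprox_le ((MvPolynomial.mem_restrictTotalDegree _ _ _).1 (b.equivFun.symm c).2)
  · obtain ⟨c, hc⟩ := b.equivFun.symm.surjective
      ⟨P, (MvPolynomial.mem_restrictTotalDegree _ _ _).2 hP⟩
    have hPc (y) : MvPolynomial.eval y P = ∑ i, c i * MvPolynomial.eval y (b i).1 := by
      rw [← hb, hc]
    simp only [hb, hPc]
    exact iInf_mem_ballMean_sub_sum_le (fun i => MvPolynomial.continuous_eval (b i).1) hF hD c x t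

lemma measurable_bestApprox (hF : Measurable F) :
    Measurable fun z : Rn n × ℝ => bestApprox m F z.1 z.2 := by
  obtain ⟨S, hSc, hS⟩ := exists_countable_forall_bestApprox_eq n m
  simp_rw [hS F hF]
  exact Measurable.biInf S hSc fun P _ =>
    measurable_ballMean (hF.sub (MvPolynomial.continuous_eval P).measurable)

lemma measurable_bestApprox_right (hF : Measurable F) (x : Rn n) :
    Measurable (bestApprox m F x) :=
  Measurable.of_uncurry_left (f := bestApprox m F) (measurable_bestApprox hF)

lemma measurable_bestApprox_left (hF : Measurable F) (t : ℝ) :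
    Measurable fun x => bestApprox m F x t :=
  Measurable.of_uncurry_right (f := bestApprox m F) (measurable_bestApprox hF)

lemma measurable_smoothnessFn {s q : ℝ} (hF : Measurable F) :
    Measurable (smoothnessFn m s q F) := by
  have h := measurable_bestApprox (m := m) hF
  refine (Measurable.lintegral_prod_right' (f := fun z : Rn n × ℝ =>
    (ENNReal.ofReal (z.2 ^ (-s)) * bestApprox m F z.1 z.2) ^ q *
      ENNReal.ofReal z.2⁻¹) ?_).pow_const _
  fun_prop

end Measurability

section NormInequalities

variable {n m : ℕ} {s p q : ℝ} {F G : Rn n → ℝ}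

lemma smoothnessFn_sub_le (hq : 1 ≤ q) (hF : Measurable F) (hG : Measurable G) (x : Rn n) :
    smoothnessFn m s q (F - G) x ≤ smoothnessFn m s q F x + smoothnessFn m s q G x := by
  have hq0 : 0 < q := one_pos.trans_le hq
  have absorb (a w : ℝ≥0∞) : a ^ q * w = (a * w ^ (1 / q)) ^ q := by
    rw [ENNReal.mul_rpow_of_nonneg _ _ hq0.le, one_div, ENNReal.rpow_inv_rpow hq0.ne']
  have hmF := measurable_bestApprox_right (m := m) hF x
  have hmG := measurable_bestApprox_right (m := m) hG x
  simp only [smoothnessFn, absorb]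
  refine le_trans ?_ (ENNReal.lintegral_Lp_add_le (by fun_prop) (by fun_prop) hq)
  gcongr with t
  simp only [Pi.add_apply, ← add_mul, ← mul_add]
  gcongr
  exact bestApprox_sub_le hF

lemma tlNorm_sub_le (hp : 1 ≤ p) (hq : 1 ≤ q) (hF : Measurable F) (hG : Measurable G) :
    tlNorm s p q (F - G) ≤ tlNorm s p q F + tlNorm s p q G := by
  simp only [tlNorm_eq]
  rw [add_add_add_comm]
  gcongr
  · refine le_trans ?_ (ENNReal.lintegral_Lp_add_le hF.enorm.aemeasurable hG.enorm.aemeasurable hp)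
    gcongr
    exact enorm_sub_le
  · refine le_trans ?_ (ENNReal.lintegral_Lp_add_le (measurable_smoothnessFn hF).aemeasurable
      (measurable_smoothnessFn hG).aemeasurable hp)
    gcongr
    exact smoothnessFn_sub_le hq hF hG _

lemma tlNormOn_le_add_tlNormOn_sub {Ω : Set (Rn n)} (hp : 1 ≤ p) (hq : 1 ≤ q) :
    tlNormOn Ω s p q G ≤ tlNormOn Ω s p q F + tlNormOn Ω s p q (F - G) := by
  simp only [tlNormOn, ENNReal.iInf_add, ENNReal.add_iInf]
  refine le_iInf fun h => le_iInf₂ fun hh hhF => le_iInf fun f => le_iInf₂ fun hf hfF => ?_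
  refine (iInf₂_le_of_le (f - h) (hf.sub hh) (iInf_le _ ?_)).trans
    (tlNorm_sub_le hp hq hf hh)
  filter_upwards [hfF, hhF] with x h₁ h₂
  simp [h₁, h₂]

lemma setLIntegral_rpow_le_tlNormOn {Ω : Set (Rn n)} (hp : 0 < p) :
    (∫⁻ x in Ω, ‖F x‖ₑ ^ p) ^ (1 / p) ≤ tlNormOn Ω s p q F := by
  refine le_iInf₂ fun G _ => le_iInf fun hGF => ?_
  rw [tlNorm_eq, lintegral_congr_ae (g := fun x => ‖G x‖ₑ ^ p)
    (hGF.mono fun x hx => by simp only [hx])]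
  refine le_add_right ?_
  gcongr
  exact Measure.restrict_le_self

end NormInequalities

section LowerSemicontinuity

lemma monotone_continuous_le_liminf {Φ : ℝ≥0∞ → ℝ≥0∞} (hm : Monotone Φ) (hc : Continuous Φ)
    {u : ℝ≥0∞} {v : ℕ → ℝ≥0∞} (h : u ≤ liminf v atTop) : Φ u ≤ liminf (fun j => Φ (v j)) atTop :=
  (hm h).trans_eq (hm.map_liminf_of_continuousAt v hc.continuousAt)

lemma rpow_inv_mul_lintegral_le {α : Type*} [MeasurableSpace α] {μ : Measure α} {p : ℝ}
    (hp : 1 ≤ p) {f : α → ℝ≥0∞} (hf : AEMeasurable f μ) {D K : ℝ≥0∞} (hD₀ : D ≠ 0) (hD : D ≠ ∞)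
    (hμ : μ univ ≤ K * D) :
    (D⁻¹ * ∫⁻ x, f x ∂μ) ^ p ≤ K ^ (p - 1) * (D⁻¹ * ∫⁻ x, f x ^ p ∂μ) := by
  have hp0 : 0 < p := one_pos.trans_le hp
  have hjensen : (∫⁻ x, f x ∂μ) ^ p ≤ μ univ ^ (p - 1) * ∫⁻ x, f x ^ p ∂μ := by
    have h := ENNReal.rpow_le_rpow
      (eLpNorm'_le_eLpNorm'_mul_rpow_measure_univ one_pos hp hf.aestronglyMeasurable) hp0.le
    simp only [eLpNorm'_eq_lintegral_enorm, enorm_eq_self, ENNReal.rpow_one, div_one] at h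
    rw [ENNReal.mul_rpow_of_nonneg _ _ hp0.le, ← ENNReal.rpow_mul, ← ENNReal.rpow_mul, sub_mul,
      one_div_mul_cancel hp0.ne', ENNReal.rpow_one, one_mul, mul_comm] at h
    exact h
  have hpow : D⁻¹ ^ p * D ^ (p - 1) = D⁻¹ := by
    rw [← ENNReal.rpow_neg_one, ← ENNReal.rpow_mul, ← ENNReal.rpow_add _ _ hD₀ hD]
    congr 1
    ring
  calc (D⁻¹ * ∫⁻ x, f x ∂μ) ^ p
    _ = D⁻¹ ^ p * (∫⁻ x, f x ∂μ) ^ p := ENNReal.mul_rpow_of_nonneg _ _ hp0.le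
    _ ≤ D⁻¹ ^ p * ((K * D) ^ (p - 1) * ∫⁻ x, f x ^ p ∂μ) := by
      gcongr
      refine hjensen.trans ?_
      gcongr
    _ = (D⁻¹ ^ p * D ^ (p - 1)) * (K ^ (p - 1) * ∫⁻ x, f x ^ p ∂μ) := by
      rw [ENNReal.mul_rpow_of_nonneg _ _ (by linarith)]
      ring
    _ = K ^ (p - 1) * (D⁻¹ * ∫⁻ x, f x ^ p ∂μ) := by
      rw [hpow]
      ring

variable {n m : ℕ} {s p q : ℝ} {F : Rn n → ℝ} {φ : ℕ → Rn n → ℝ}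

lemma ballMean_rpow_le (hp : 1 ≤ p) (hF : Measurable F) (x : Rn n) {t : ℝ} (ht : 0 < t) :
    ballMean F x t ^ p ≤ (volume (closedBall x t))⁻¹ * ∫⁻ y in closedBall x t, ‖F y‖ₑ ^ p := by
  have h := rpow_inv_mul_lintegral_le (μ := volume.restrict (closedBall x t)) (K := 1) hp
    hF.enorm.aemeasurable (measure_closedBall_pos volume x ht).ne' measure_closedBall_lt_top.ne
    (by simp)
  simpa only [ballMean_eq, ENNReal.one_rpow, one_mul] using h

lemma tendsto_ballMean_sub (hp : 1 ≤ p) (hF : Measurable F) (hφ : ∀ j, Measurable (φ j))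
    (hlim : Tendsto (fun j => ∫⁻ x, ‖F x - φ j x‖ₑ ^ p) atTop (𝓝 0)) (x : Rn n) {t : ℝ}
    (ht : 0 < t) : Tendsto (fun j => ballMean (F - φ j) x t) atTop (𝓝 0) := by
  have hp0 : 0 < p := one_pos.trans_le hp
  have hbound (j) : ballMean (F - φ j) x t ≤
      ((volume (closedBall x t))⁻¹ * ∫⁻ y, ‖F y - φ j y‖ₑ ^ p) ^ (1 / p) := by
    rw [one_div, ENNReal.le_rpow_inv_iff hp0]
    refine (ballMean_rpow_le hp (hF.sub (hφ j)) x ht).trans ?_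
    simp only [Pi.sub_apply]
    gcongr
    exact Measure.restrict_le_self
  refine tendsto_of_tendsto_of_tendsto_of_le_of_le tendsto_const_nhds ?_ (fun _ => zero_le) hbound
  have h := (ENNReal.Tendsto.const_mul (a := (volume (closedBall x t))⁻¹) hlim
    (Or.inr (by simpa using (measure_closedBall_pos volume x ht).ne'))).ennrpow_const (1 / p)
  rwa [mul_zero, ENNReal.zero_rpow_of_pos (by positivity)] at h

lemma bestApprox_le_liminf (hφ : ∀ j, Measurable (φ j)) {x : Rn n} {t : ℝ}
    (hlim : Tendsto (fun j => ballMean (F - φ j) x t) atTop (𝓝 0)) :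
    bestApprox m F x t ≤ liminf (fun j => bestApprox m (φ j) x t) atTop := by
  rw [← ENNReal.liminf_add_of_right_tendsto_zero hlim]
  exact le_liminf_of_le (by isBoundedDefault)
    (.of_forall fun j => bestApprox_le_add_ballMean_sub (hφ j))

lemma smoothnessFn_le_liminf (hq : 0 < q) (hφ : ∀ j, Measurable (φ j)) {x : Rn n}
    (hlim : ∀ t > 0, Tendsto (fun j => ballMean (F - φ j) x t) atTop (𝓝 0)) :
    smoothnessFn m s q F x ≤ liminf (fun j => smoothnessFn m s q (φ j) x) atTop := by
  refine monotone_continuous_le_liminf (ENNReal.monotone_rpow_of_nonneg (by positivity))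
    ENNReal.continuous_rpow_const ((setLIntegral_mono' measurableSet_Ioo fun t ht => ?_).trans
      (lintegral_liminf_le fun j => ?_))
  swap
  · have := measurable_bestApprox_right (m := m) (hφ j) x
    fun_prop
  refine monotone_continuous_le_liminf
    (Φ := fun a => (ENNReal.ofReal (t ^ (-s)) * a) ^ q * ENNReal.ofReal t⁻¹) (fun a b hab => ?_) ?_
    (bestApprox_le_liminf hφ (hlim t ht.1))
  · dsimp only
    gcongr
  · exact (ENNReal.continuous_mul_const (by simp)).comp
      (ENNReal.continuous_rpow_const.comp (ENNReal.continuous_const_mul (by simp)))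

lemma tlNorm_le_liminf (hp : 1 ≤ p) (hq : 0 < q) (hF : Measurable F) (hφ : ∀ j, Measurable (φ j))
    (hlim : Tendsto (fun j => ∫⁻ x, ‖F x - φ j x‖ₑ ^ p) atTop (𝓝 0)) :
    tlNorm s p q F ≤ liminf (fun j => tlNorm s p q (φ j)) atTop := by
  have hp0 : 0 < p := one_pos.trans_le hp
  have hroot : Tendsto (fun j => (∫⁻ x, ‖F x - φ j x‖ₑ ^ p) ^ (1 / p)) atTop (𝓝 0) := by
    have h := hlim.ennrpow_const (1 / p)
    rwa [ENNReal.zero_rpow_of_pos (by positivity)] at h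
  have hLp (j) : (∫⁻ x, ‖F x‖ₑ ^ p) ^ (1 / p) ≤
      (∫⁻ x, ‖φ j x‖ₑ ^ p) ^ (1 / p) + (∫⁻ x, ‖F x - φ j x‖ₑ ^ p) ^ (1 / p) := by
    refine le_trans ?_ (ENNReal.lintegral_Lp_add_le (hφ j).enorm.aemeasurable
      (hF.sub (hφ j)).enorm.aemeasurable hp)
    gcongr with x
    simpa using enorm_add_le (φ j x) (F x - φ j x)
  have hsmooth : (∫⁻ x, smoothnessFn ⌊s⌋₊ s q F x ^ p) ^ (1 / p) ≤
      liminf (fun j => (∫⁻ x, smoothnessFn ⌊s⌋₊ s q (φ j) x ^ p) ^ (1 / p)) atTop := by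
    refine monotone_continuous_le_liminf (ENNReal.monotone_rpow_of_nonneg (by positivity))
      ENNReal.continuous_rpow_const ((lintegral_mono fun x => ?_).trans
        (lintegral_liminf_le fun j => (measurable_smoothnessFn (hφ j)).pow_const _))
    exact monotone_continuous_le_liminf (ENNReal.monotone_rpow_of_nonneg hp0.le)
      ENNReal.continuous_rpow_const
      (smoothnessFn_le_liminf hq hφ fun t ht => tendsto_ballMean_sub hp hF hφ hlim x ht)
  rw [← ENNReal.liminf_add_of_right_tendsto_zero hroot]
  simp only [tlNorm_eq]
  refine (monotone_continuous_le_liminf (fun _ _ h => add_le_add_right h _)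
    (continuous_const.add continuous_id) hsmooth).trans (liminf_le_liminf (.of_forall fun j => ?_))
  simp only [Pi.add_apply, add_right_comm _ _ ((∫⁻ x, ‖F x - φ j x‖ₑ ^ p) ^ (1 / p))]
  gcongr
  exact hLp j

end LowerSemicontinuity
/-- The radius `2^(-j)` of the `j`-th dyadic generation of cubes. -/
def dyadicRadius (j : ℕ) : ℝ := (1 / 2) ^ j

/-- The weight `2^(a j)` of the `j`-th dyadic generation. -/
def dyadicWeight (a : ℝ) (j : ℕ) : ℝ≥0∞ := 2 ^ (a * j)

local notation "𝔯" => dyadicRadius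
local notation "𝔴" => dyadicWeight

section DyadicScales

lemma dyadicRadius_pos (j : ℕ) : 0 < 𝔯 j := by
  unfold dyadicRadius; positivity

lemma dyadicRadius_succ (j : ℕ) : 𝔯 (j + 1) = 𝔯 j / 2 := by
  rw [dyadicRadius, pow_succ, dyadicRadius]; ring

lemma dyadicRadius_anti : Antitone 𝔯 := fun _ _ h =>
  pow_le_pow_of_le_one (by norm_num) (by norm_num) h

lemma dyadicRadius_le_one (j : ℕ) : 𝔯 j ≤ 1 :=
  pow_le_one₀ (by norm_num) (by norm_num)

lemma dyadicRadius_succ_le_half (j : ℕ) : 𝔯 (j + 1) ≤ 1 / 2 := by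
  rw [dyadicRadius_succ]
  linarith [dyadicRadius_le_one j]

lemma dyadicWeight_ne_zero (a : ℝ) (j : ℕ) : 𝔴 a j ≠ 0 := by
  simp [dyadicWeight]

lemma dyadicWeight_ne_top (a : ℝ) (j : ℕ) : 𝔴 a j ≠ ∞ :=
  ENNReal.rpow_ne_top_of_ne_zero two_ne_zero ENNReal.ofNat_ne_top

lemma dyadicWeight_zero_left (j : ℕ) : 𝔴 0 j = 1 := by
  simp [dyadicWeight]

lemma dyadicWeight_add_right (a : ℝ) (i j : ℕ) : 𝔴 a (i + j) = 𝔴 a i * 𝔴 a j := by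
  rw [dyadicWeight, Nat.cast_add, mul_add,
    ENNReal.rpow_add _ _ two_ne_zero ENNReal.ofNat_ne_top, dyadicWeight, dyadicWeight]

lemma dyadicWeight_add_left (a b : ℝ) (j : ℕ) : 𝔴 (a + b) j = 𝔴 a j * 𝔴 b j := by
  rw [dyadicWeight, add_mul, ENNReal.rpow_add _ _ two_ne_zero ENNReal.ofNat_ne_top, dyadicWeight,
    dyadicWeight]

lemma dyadicWeight_neg_mul (a : ℝ) (j : ℕ) : 𝔴 (-a) j * 𝔴 a j = 1 := by
  rw [← dyadicWeight_add_left, neg_add_cancel, dyadicWeight_zero_left]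

lemma dyadicWeight_inv (a : ℝ) (j : ℕ) : (𝔴 a j)⁻¹ = 𝔴 (-a) j := by
  rw [dyadicWeight, dyadicWeight, neg_mul, ENNReal.rpow_neg]

lemma dyadicWeight_rpow (a p : ℝ) (j : ℕ) : 𝔴 a j ^ p = 𝔴 (a * p) j := by
  rw [dyadicWeight, dyadicWeight, ← ENNReal.rpow_mul, mul_right_comm]

lemma dyadicWeight_mono {a : ℝ} (ha : 0 ≤ a) : Monotone (𝔴 a) := fun i j h =>
  ENNReal.rpow_le_rpow_of_exponent_le one_le_two (by gcongr)

lemma ofReal_dyadicRadius_rpow (d : ℝ) (j : ℕ) : ENNReal.ofReal (𝔯 j ^ d) = 𝔴 (-d) j := by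
  have h : 𝔯 j = 2 ^ (-(j : ℝ)) := by
    rw [dyadicRadius, Real.rpow_neg zero_le_two, Real.rpow_natCast, one_div, inv_pow]
  rw [h, ← Real.rpow_mul zero_le_two, ← ENNReal.ofReal_rpow_of_pos zero_lt_two,
    ENNReal.ofReal_ofNat, dyadicWeight]
  congr 1
  ring

lemma tsum_dyadicWeight_neg_ne_top {a : ℝ} (ha : 0 < a) : ∑' j, 𝔴 (-a) j ≠ ∞ := by
  simp_rw [dyadicWeight, ENNReal.rpow_mul, ENNReal.rpow_natCast, ENNReal.tsum_geometric]
  have h : (2 : ℝ≥0∞) ^ (-a) < 1 :=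
    ENNReal.rpow_lt_one_of_one_lt_of_neg ENNReal.one_lt_two (neg_neg_of_pos ha)
  simpa [tsub_eq_zero_iff_le] using h

variable {p γ : ℝ}

lemma exists_sum_rpow_le_sum_dyadicWeight (hp : 1 < p) (hγ : 0 < γ) :
    ∃ C ≠ ∞, ∀ (s : Finset ℕ) (k : ℕ → ℕ), InjOn k s → ∀ c : ℕ → ℝ≥0∞,
      (∑ i ∈ s, c i) ^ p ≤ C * ∑ i ∈ s, 𝔴 γ (k i) * c i ^ p := by
  have hp0 : 0 < p := by linarith
  have hconj := Real.HolderConjugate.conjExponent hp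
  set p' := Real.conjExponent p
  have hp' : 0 < p' := hconj.symm.pos
  set D := ∑' j, 𝔴 (-(γ / p * p')) j
  have hD : D ≠ ∞ := tsum_dyadicWeight_neg_ne_top (by positivity)
  refine ⟨D ^ (1 / p' * p), by finiteness, fun s k hk c => ?_⟩
  calc (∑ i ∈ s, c i) ^ p
      = (∑ i ∈ s, 𝔴 (γ / p) (k i) * c i * 𝔴 (-(γ / p)) (k i)) ^ p := by
        simp_rw [mul_comm (_ * c _), ← mul_assoc, dyadicWeight_neg_mul, one_mul]
    _ ≤ ((∑ i ∈ s, (𝔴 (γ / p) (k i) * c i) ^ p) ^ (1 / p) *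
          (∑ i ∈ s, 𝔴 (-(γ / p)) (k i) ^ p') ^ (1 / p')) ^ p := by
        gcongr
        exact ENNReal.inner_le_Lp_mul_Lq s _ _ hconj
    _ = (∑ i ∈ s, 𝔴 (-(γ / p * p')) (k i)) ^ (1 / p' * p) *
          ∑ i ∈ s, 𝔴 γ (k i) * c i ^ p := by
        simp_rw [ENNReal.mul_rpow_of_nonneg _ _ hp0.le, dyadicWeight_rpow, neg_mul,
          ← ENNReal.rpow_mul, one_div_mul_cancel hp0.ne', ENNReal.rpow_one,
          div_mul_cancel₀ γ hp0.ne', mul_comm]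
    _ ≤ D ^ (1 / p' * p) * ∑ i ∈ s, 𝔴 γ (k i) * c i ^ p := by
        gcongr
        rw [← Finset.sum_image (f := 𝔴 (-(γ / p * p'))) hk]
        exact ENNReal.sum_le_tsum _

lemma exists_tsum_rpow_le_tsum_dyadicWeight (hp : 1 < p) (hγ : 0 < γ) :
    ∃ C ≠ ∞, ∀ c : ℕ → ℝ≥0∞, (∑' l, c l) ^ p ≤ C * ∑' l, 𝔴 γ l * c l ^ p := by
  obtain ⟨C, hC, h⟩ := exists_sum_rpow_le_sum_dyadicWeight hp hγ
  refine ⟨C, hC, fun c => le_of_tendsto' ((ENNReal.tendsto_nat_tsum c).ennrpow_const p) fun N => ?_⟩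
  refine (h (Finset.range N) id (injOn_id _) c).trans ?_
  gcongr
  exact ENNReal.sum_le_tsum _

/-- Discrete layer-cake inequality: for `U = {0, …, M}` the inner sum on the right is comparable to
the weight `2^(γ (M - i))`, so that this is Hölder's inequality with weights centred at `M`. -/
lemma exists_tsum_indicator_rpow_le (hp : 1 < p) (hγ : 0 < γ) :
    ∃ C ≠ ∞, ∀ (c : ℕ → ℝ≥0∞) (U : Set ℕ), IsLowerSet U →
      (∑' i, U.indicator c i) ^ p ≤
        C * ∑' i, c i ^ p * ∑' l, {l | i + l ∈ U}.indicator (𝔴 γ) l := by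
  obtain ⟨C, hC, h⟩ := exists_sum_rpow_le_sum_dyadicWeight hp hγ
  refine ⟨C, hC, fun c U hU =>
    le_of_tendsto' ((ENNReal.tendsto_nat_tsum _).ennrpow_const p) fun N => ?_⟩
  induction N with
  | zero => simp [ENNReal.zero_rpow_of_pos (zero_lt_one.trans hp)]
  | succ N ih =>
    by_cases hN : N ∈ U
    · have hmem : ∀ i ∈ Finset.range (N + 1), i ∈ U := fun i hi =>
        hU (Finset.mem_range_succ_iff.1 hi) hN
      rw [Finset.sum_congr rfl fun i hi => indicator_of_mem (hmem i hi) c]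
      refine (h _ (N - ·) (fun i hi j hj hij => ?_) c).trans ?_
      · rw [Finset.mem_coe, Finset.mem_range] at hi hj
        grind
      gcongr
      refine (Finset.sum_le_sum fun i hi => ?_).trans (ENNReal.sum_le_tsum (Finset.range (N + 1)))
      rw [mul_comm]
      gcongr
      have hmem' : N - i ∈ {l | i + l ∈ U} := by
        rwa [mem_ofPred_eq, Nat.add_sub_cancel' (Finset.mem_range_succ_iff.1 hi)]
      rw [← indicator_of_mem hmem' (𝔴 γ)]
      exact ENNReal.le_tsum _
    · rwa [Finset.sum_range_succ, indicator_of_notMem hN, add_zero]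

end DyadicScales

section BoundaryAverages

variable {X : Type*} [PseudoMetricSpace X] [MeasurableSpace X] [OpensMeasurableSpace X]
  [SecondCountableTopology X] {ν : Measure X} [SFinite ν]

lemma lintegral_setLIntegral_closedBall (μ : Measure X) [SFinite μ] {f : X → ℝ≥0∞}
    (hf : Measurable f) (r : ℝ) :
    ∫⁻ x, ∫⁻ y in closedBall x r, f y ∂ν ∂μ = ∫⁻ y, f y * μ (closedBall y r) ∂ν := by
  have hdist : MeasurableSet {z : X × X | dist z.2 z.1 ≤ r} :=
    measurableSet_le (by fun_prop) (by fun_prop)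
  have hindicator (x y : X) : (closedBall x r).indicator f y =
      (closedBall y r).indicator (fun _ => f y) x := by
    simp only [indicator, mem_closedBall, dist_comm x y]
  calc ∫⁻ x, ∫⁻ y in closedBall x r, f y ∂ν ∂μ
      = ∫⁻ x, ∫⁻ y, (closedBall x r).indicator f y ∂ν ∂μ := by
        simp_rw [lintegral_indicator measurableSet_closedBall]
    _ = ∫⁻ y, ∫⁻ x, (closedBall x r).indicator f y ∂μ ∂ν :=
        lintegral_lintegral_swap ((hf.comp measurable_snd).indicator hdist).aemeasurable
    _ = ∫⁻ y, f y * μ (closedBall y r) ∂ν := by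
        simp_rw [hindicator, lintegral_indicator measurableSet_closedBall, setLIntegral_const]

lemma lintegral_inv_mul_setLIntegral_closedBall_rpow_le {p : ℝ} (hp : 1 ≤ p) {D K : ℝ≥0∞}
    (hD₀ : D ≠ 0) (hD : D ≠ ∞) {r : ℝ} (hν : ∀ w, ν (closedBall w r) ≤ K * D) {g : X → ℝ≥0∞}
    (hg : Measurable g) :
    ∫⁻ w, (D⁻¹ * ∫⁻ z in closedBall w r, g z ∂ν) ^ p ∂ν ≤ K ^ p * ∫⁻ z, g z ^ p ∂ν := by
  have hmeas : Measurable fun w => ∫⁻ z in closedBall w r, g z ^ p ∂ν :=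
    (measurable_setLIntegral_closedBall ν (hg.pow_const p)).comp
      (measurable_id.prodMk measurable_const)
  calc ∫⁻ w, (D⁻¹ * ∫⁻ z in closedBall w r, g z ∂ν) ^ p ∂ν
      ≤ ∫⁻ w, K ^ (p - 1) * (D⁻¹ * ∫⁻ z in closedBall w r, g z ^ p ∂ν) ∂ν :=
        lintegral_mono fun w => rpow_inv_mul_lintegral_le hp hg.aemeasurable hD₀ hD
          (by simpa using hν w)
    _ = K ^ (p - 1) * (D⁻¹ * ∫⁻ z, g z ^ p * ν (closedBall z r) ∂ν) := by
        rw [lintegral_const_mul _ (hmeas.const_mul _), lintegral_const_mul _ hmeas,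
          lintegral_setLIntegral_closedBall ν (hg.pow_const p)]
    _ ≤ K ^ (p - 1) * (D⁻¹ * ∫⁻ z, g z ^ p * (K * D) ∂ν) := by
        gcongr with z
        exact hν z
    _ = K ^ p * ∫⁻ z, g z ^ p ∂ν := by
        rw [lintegral_mul_const _ (hg.pow_const p), ← sub_add_cancel p 1,
          ENNReal.rpow_add_of_nonneg _ _ (sub_nonneg.2 hp) zero_le_one, ENNReal.rpow_one,
          sub_add_cancel]
        calc _ = K ^ (p - 1) * K * (∫⁻ z, g z ^ p ∂ν) * (D⁻¹ * D) := by ring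
          _ = _ := by rw [ENNReal.inv_mul_cancel hD₀ hD, mul_one]

end BoundaryAverages

section BoundaryValues

/-- `F` vanishes `μ`-almost everywhere in a uniform neighbourhood of `Γ`. -/
def VanishesNear {X : Type*} [PseudoMetricSpace X] [MeasurableSpace X] (Γ : Set X) (μ : Measure X)
    (F : X → ℝ) : Prop :=
  ∃ r > 0, ∀ w ∈ Γ, ∀ᵐ x ∂μ, x ∈ closedBall w r → F x = 0

variable {n : ℕ} {Γ : Set (Rn n)} {μ ν : Measure (Rn n)} {K : ℝ≥0∞} {d : ℝ}

lemma volume_closedBall_eq_mul_rpow (x : Rn n) {t : ℝ} (ht : 0 ≤ t) :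
    volume (closedBall x t) = 2 ^ n * ENNReal.ofReal (t ^ (n : ℝ)) := by
  rw [volume_closedBall_eq x ht, mul_pow, ENNReal.ofReal_mul (by positivity), Real.rpow_natCast,
    ENNReal.ofReal_pow zero_le_two, ENNReal.ofReal_ofNat]

lemma upperRegular_of_le_volume (hμ : μ ≤ volume) (ρ : ℝ) : UpperRegular n (2 ^ n) ρ μ :=
  fun x _ hr _ => (hμ _).trans_eq (volume_closedBall_eq_mul_rpow x hr.le)

lemma UpperRegular.mono {K' : ℝ≥0∞} {ρ ρ' : ℝ} (h : UpperRegular d K ρ μ) (hK : K ≤ K')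
    (hρ : ρ' ≤ ρ) : UpperRegular d K' ρ' μ := fun x r hr hrρ =>
  (h x r hr (hrρ.trans hρ)).trans (by gcongr)

lemma exists_enorm_eval_le_ballMean_sub (hn : 0 < n) (m : ℕ) (hK : K ≠ ∞) :
    ∃ C ≠ ∞, ∀ μ : Measure (Rn n), μ ≤ volume → ∀ (w : Rn n) (t : ℝ), 0 < t →
      ENNReal.ofReal (t ^ (n : ℝ)) ≤ K * μ (closedBall w t) →
      ∀ F : Rn n → ℝ, (∀ᵐ x ∂μ, x ∈ closedBall w t → F x = 0) →
      ∀ P : MvPolynomial (Fin n) ℝ, P.totalDegree ≤ m → ∀ y ∈ closedBall w t,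
        ‖MvPolynomial.eval y P‖ₑ ≤ C * ballMean (fun z => F z - MvPolynomial.eval z P) w t := by
  obtain ⟨C, hC, hmarkov⟩ := exists_enorm_eval_le (Fin n) m (d := n) (by exact_mod_cast hn)
    (by simp) (K := K + 2 ^ n) (by finiteness)
  refine ⟨C * 2 ^ n, by finiteness, fun μ hμ w t ht hlow F hF P hP y hy => ?_⟩
  have hmean : ∫⁻ z in closedBall w t, ‖MvPolynomial.eval z P‖ₑ ∂μ ≤
      ∫⁻ z in closedBall w t, ‖F z - MvPolynomial.eval z P‖ₑ :=
    calc ∫⁻ z in closedBall w t, ‖MvPolynomial.eval z P‖ₑ ∂μ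
        = ∫⁻ z in closedBall w t, ‖F z - MvPolynomial.eval z P‖ₑ ∂μ :=
          setLIntegral_congr_fun_ae measurableSet_closedBall
            (hF.mono fun z hz hzB => by simp [hz hzB])
      _ ≤ _ := lintegral_mono' (Measure.restrict_mono subset_rfl hμ) le_rfl
  refine (hmarkov μ w t ht ((upperRegular_of_le_volume hμ t).mono le_add_self le_rfl)
    (hlow.trans (by gcongr; exact le_self_add)) P hP y hy).trans ?_
  calc C * ((ENNReal.ofReal (t ^ (n : ℝ)))⁻¹ * ∫⁻ z in closedBall w t, ‖MvPolynomial.eval z P‖ₑ ∂μ)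
      ≤ C * ((ENNReal.ofReal (t ^ (n : ℝ)))⁻¹ *
          ∫⁻ z in closedBall w t, ‖F z - MvPolynomial.eval z P‖ₑ) := by gcongr
    _ = C * ((2 ^ n * (2 ^ n)⁻¹) * (ENNReal.ofReal (t ^ (n : ℝ)))⁻¹ *
          ∫⁻ z in closedBall w t, ‖F z - MvPolynomial.eval z P‖ₑ) := by
        rw [ENNReal.mul_inv_cancel (by simp) (by simp), one_mul]
    _ = C * 2 ^ n * ballMean (fun z => F z - MvPolynomial.eval z P) w t := by
        rw [ballMean_eq, volume_closedBall_eq_mul_rpow w ht.le,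
          ENNReal.mul_inv (by simp) (by simp)]
        ring

lemma exists_enorm_eval_le_ballMean (hn : 0 < n) (m : ℕ) :
    ∃ C ≠ ∞, ∀ (w : Rn n) (t : ℝ), 0 < t → ∀ P : MvPolynomial (Fin n) ℝ, P.totalDegree ≤ m →
      ∀ y ∈ closedBall w t,
        ‖MvPolynomial.eval y P‖ₑ ≤ C * ballMean (fun z => MvPolynomial.eval z P) w t := by
  obtain ⟨C, hC, h⟩ := exists_enorm_eval_le_ballMean_sub hn m ENNReal.one_ne_top
  refine ⟨C, hC, fun w t ht P hP y hy => ?_⟩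
  have hvol : ENNReal.ofReal (t ^ (n : ℝ)) ≤ 1 * volume (closedBall w t) := by
    rw [one_mul, volume_closedBall_eq_mul_rpow w ht.le]
    exact le_mul_of_one_le_left' (one_le_pow₀ one_le_two)
  simpa [ballMean] using h volume le_rfl w t ht hvol 0 (by simp) P hP y hy

lemma ballMean_dyadicRadius_succ_le {F : Rn n → ℝ} {w z : Rn n} {j : ℕ}
    (hz : z ∈ closedBall w (𝔯 (j + 1))) :
    ballMean F z (𝔯 (j + 1)) ≤ 2 ^ n * ballMean F w (𝔯 j) := by
  have hj := dyadicRadius_succ j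
  convert ballMean_mono (F := F) (c := 2) (dyadicRadius_pos (j + 1)) (r := 𝔯 j) ?_
    (by linarith) using 2
  · simp [ENNReal.ofReal_pow]
  · linarith [mem_closedBall.1 hz]

lemma exists_enorm_eval_le_enorm_eval_add (hn : 0 < n) (m : ℕ) :
    ∃ C ≠ ∞, ∀ F : Rn n → ℝ, Measurable F → ∀ (w : Rn n) (j : ℕ) (P Q : MvPolynomial (Fin n) ℝ),
      P.totalDegree ≤ m → Q.totalDegree ≤ m →
      ‖MvPolynomial.eval w P‖ₑ ≤ ‖MvPolynomial.eval w Q‖ₑ +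
        C * (ballMean (fun z => F z - MvPolynomial.eval z Q) w (𝔯 (j + 1)) +
          ballMean (fun z => F z - MvPolynomial.eval z P) w (𝔯 j)) := by
  obtain ⟨C, hC, hmarkov⟩ := exists_enorm_eval_le_ballMean hn m
  refine ⟨C * 2 ^ n, by finiteness, fun F hF w j P Q hP hQ => ?_⟩
  have hw := mem_closedBall_self (x := w) (dyadicRadius_pos (j + 1)).le
  have hdiff : (fun z => MvPolynomial.eval z (P - Q)) =
      (fun z => F z - MvPolynomial.eval z Q) - fun z => F z - MvPolynomial.eval z P := by
    ext z; simp
  calc ‖MvPolynomial.eval w P‖ₑ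
      = ‖MvPolynomial.eval w Q + MvPolynomial.eval w (P - Q)‖ₑ := by simp
    _ ≤ ‖MvPolynomial.eval w Q‖ₑ + ‖MvPolynomial.eval w (P - Q)‖ₑ := enorm_add_le _ _
    _ ≤ ‖MvPolynomial.eval w Q‖ₑ +
          C * ballMean (fun z => MvPolynomial.eval z (P - Q)) w (𝔯 (j + 1)) := by
        gcongr
        exact hmarkov w _ (dyadicRadius_pos _) _
          ((MvPolynomial.totalDegree_sub P Q).trans (max_le hP hQ)) w hw
    _ ≤ ‖MvPolynomial.eval w Q‖ₑ +
          C * (2 ^ n * ballMean (fun z => F z - MvPolynomial.eval z Q) w (𝔯 (j + 1)) +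
            2 ^ n * ballMean (fun z => F z - MvPolynomial.eval z P) w (𝔯 j)) := by
        rw [hdiff]
        gcongr
        refine (ballMean_sub_le (hF.sub (MvPolynomial.continuous_eval Q).measurable)).trans ?_
        gcongr
        · exact le_mul_of_one_le_left' (one_le_pow₀ one_le_two)
        · exact ballMean_dyadicRadius_succ_le hw
    _ = ‖MvPolynomial.eval w Q‖ₑ + C * 2 ^ n *
          (ballMean (fun z => F z - MvPolynomial.eval z Q) w (𝔯 (j + 1)) +
            ballMean (fun z => F z - MvPolynomial.eval z P) w (𝔯 j)) := by
        rw [← mul_add, mul_assoc]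

/-- The sum of the local best approximations of `F` on the dyadic cubes centred at `w` from
generation `j` onwards. -/
def bestApproxTail (m : ℕ) (F : Rn n → ℝ) (j : ℕ) (w : Rn n) : ℝ≥0∞ :=
  ∑' l, bestApprox m F w (𝔯 (j + l))

lemma bestApproxTail_eq_add (m : ℕ) (F : Rn n → ℝ) (j : ℕ) (w : Rn n) :
    bestApproxTail m F j w = bestApprox m F w (𝔯 j) + bestApproxTail m F (j + 1) w := by
  rw [bestApproxTail, tsum_eq_zero_add' ENNReal.summable]
  simp_rw [bestApproxTail, add_zero, add_assoc, add_comm 1]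

lemma measurable_bestApproxTail {m : ℕ} {F : Rn n → ℝ} (hF : Measurable F) (j : ℕ) :
    Measurable (bestApproxTail m F j) :=
  Measurable.tsum fun _ => measurable_bestApprox_left hF _

end BoundaryValues

section BoundaryMeans

variable {n : ℕ} {Γ : Set (Rn n)} {μ ν : Measure (Rn n)} {K : ℝ≥0∞} {d : ℝ}

/-- Telescoping: the value at `w` of a polynomial approximating `F` on the `j`-th cube is passed on
to approximating polynomials on smaller and smaller cubes, until `F` vanishes on a thick part of
the cube. -/
lemma exists_enorm_eval_le_add_bestApproxTail (hn : 0 < n) (m : ℕ) (hK : K ≠ ∞) (hμ : μ ≤ volume)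
    (hthick : LowerRegularOn Γ n K μ) :
    ∃ C ≠ ∞, ∀ F : Rn n → ℝ, Measurable F → VanishesNear Γ μ F → ∀ w ∈ Γ, ∀ (j : ℕ)
      (P : MvPolynomial (Fin n) ℝ), P.totalDegree ≤ m → ‖MvPolynomial.eval w P‖ₑ ≤
        C * (ballMean (fun z => F z - MvPolynomial.eval z P) w (𝔯 j) + bestApproxTail m F j w) := by
  obtain ⟨A, hA, hmarkov⟩ := exists_enorm_eval_le_ballMean_sub hn m hK
  obtain ⟨B, hB, hstep⟩ := exists_enorm_eval_le_enorm_eval_add hn m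
  refine ⟨A + B + B, by finiteness, fun F hF ⟨r, hr, hvanish⟩ w hw => ?_⟩
  obtain ⟨M, hM⟩ : ∃ M, 𝔯 M < r := exists_pow_lt_of_lt_one hr (by norm_num)
  have hinduction : ∀ k j, M ≤ j + k → ∀ P : MvPolynomial (Fin n) ℝ, P.totalDegree ≤ m →
      ‖MvPolynomial.eval w P‖ₑ ≤ (A + B) * ballMean (fun z => F z - MvPolynomial.eval z P) w (𝔯 j) +
        (A + B + B) * bestApproxTail m F (j + 1) w := by
    intro k
    induction k with
    | zero =>
      intro j hj P hP
      refine (hmarkov μ hμ w _ (dyadicRadius_pos j)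
        (hthick w hw _ (dyadicRadius_pos j) (dyadicRadius_le_one j)) F ?_ P hP w
        (mem_closedBall_self (dyadicRadius_pos j).le)).trans
          (le_add_right (by gcongr; exact le_self_add))
      filter_upwards [hvanish w hw] with x hx hxw
      exact hx (closedBall_subset_closedBall ((dyadicRadius_anti hj).trans hM.le) hxw)
    | succ k ih =>
      intro j hj P hP
      rw [bestApproxTail_eq_add, mul_add, add_left_comm, add_comm]
      refine le_add_mul_bestApprox (by finiteness) fun Q hQ => ?_
      refine (hstep F hF w j P Q hP hQ).trans ?_
      grw [ih (j + 1) (by omega) Q hQ]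
      generalize ballMean _ w (𝔯 (j + 1)) = a
      generalize ballMean _ w (𝔯 j) = b
      generalize bestApproxTail m F (j + 1 + 1) w = T
      calc (A + B) * a + (A + B + B) * T + B * (a + b)
          = B * b + (A + B + B) * T + (A + B + B) * a := by ring
        _ ≤ (A + B) * b + (A + B + B) * T + (A + B + B) * a := by
          gcongr
          exact le_add_self
  intro j P hP
  refine (hinduction M j le_add_self P hP).trans ?_
  rw [mul_add, bestApproxTail_eq_add m F j]
  gcongr
  · exact le_self_add
  · exact le_add_self

lemma AhlforsRegular.measure_closedBall_dyadicRadius_le (hν : AhlforsRegular Γ d K ν) (w : Rn n)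
    (j : ℕ) : ν (closedBall w (𝔯 (j + 1))) ≤ K * 𝔴 (-d) (j + 1) := by
  rw [← ofReal_dyadicRadius_rpow]
  exact hν.upper w _ (dyadicRadius_pos _) (dyadicRadius_succ_le_half j)

lemma ballMean_le_of_forall_enorm_le {F : Rn n → ℝ} {x : Rn n} {t : ℝ} {c : ℝ≥0∞}
    (h : ∀ y ∈ closedBall x t, ‖F y‖ₑ ≤ c) : ballMean F x t ≤ c := by
  rw [ballMean_eq]
  calc (volume (closedBall x t))⁻¹ * ∫⁻ y in closedBall x t, ‖F y‖ₑ
      ≤ (volume (closedBall x t))⁻¹ * ∫⁻ _ in closedBall x t, c := by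
        gcongr 1
        exact setLIntegral_mono' measurableSet_closedBall h
    _ = c * ((volume (closedBall x t))⁻¹ * volume (closedBall x t)) := by
        rw [setLIntegral_const]; ring
    _ ≤ c := mul_le_of_le_one_right' (ENNReal.inv_mul_le_one _)

lemma AhlforsRegular.exists_ballMean_eval_le (hd : 0 < d) (hnd : (n : ℝ) - 1 < d) (m : ℕ)
    (hK : K ≠ ∞) (hν : AhlforsRegular Γ d K ν) :
    ∃ C ≠ ∞, ∀ w ∈ Γ, ∀ (j : ℕ) (P : MvPolynomial (Fin n) ℝ), P.totalDegree ≤ m →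
      ballMean (fun z => MvPolynomial.eval z P) w (𝔯 (j + 1)) ≤
        C * (𝔴 d (j + 1) * ∫⁻ z in closedBall w (𝔯 (j + 1)), ‖MvPolynomial.eval z P‖ₑ ∂ν) := by
  obtain ⟨C, hC, hmarkov⟩ := exists_enorm_eval_le (Fin n) m hd (by simpa using hnd) hK
  refine ⟨C, hC, fun w hw j P hP => ballMean_le_of_forall_enorm_le fun y hy => ?_⟩
  have hj := dyadicRadius_pos (j + 1)
  rw [← neg_neg d, ← dyadicWeight_inv, ← ofReal_dyadicRadius_rpow]
  exact hmarkov ν w _ hj (hν.upper.mono le_rfl (dyadicRadius_succ_le_half j))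
    (hν.lower w hw _ hj (dyadicRadius_le_one _)) P hP y hy

lemma exists_setLIntegral_enorm_eval_le (hn : 0 < n) (m : ℕ) (hK : K ≠ ∞) (hμ : μ ≤ volume)
    (hthick : LowerRegularOn Γ n K μ) (hν : AhlforsRegular Γ d K ν) :
    ∃ C ≠ ∞, ∀ F : Rn n → ℝ, Measurable F → VanishesNear Γ μ F → ∀ (w : Rn n) (j : ℕ)
      (P : MvPolynomial (Fin n) ℝ), P.totalDegree ≤ m →
      𝔴 d (j + 1) * ∫⁻ z in closedBall w (𝔯 (j + 1)), ‖MvPolynomial.eval z P‖ₑ ∂ν ≤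
        C * (2 ^ n * K * ballMean (fun z => F z - MvPolynomial.eval z P) w (𝔯 j) +
          𝔴 d (j + 1) * ∫⁻ z in closedBall w (𝔯 (j + 1)), bestApproxTail m F j z ∂ν) := by
  obtain ⟨C, hC, htelescope⟩ := exists_enorm_eval_le_add_bestApproxTail hn m hK hμ hthick
  refine ⟨C, hC, fun F hF hvanish w j P hP => ?_⟩
  set B := closedBall w (𝔯 (j + 1))
  set I := ∫⁻ z in B, bestApproxTail m F j z ∂ν
  set b := ballMean (fun z => F z - MvPolynomial.eval z P) w (𝔯 j)
  calc 𝔴 d (j + 1) * ∫⁻ z in B, ‖MvPolynomial.eval z P‖ₑ ∂ν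
      ≤ 𝔴 d (j + 1) * ∫⁻ z in B, C * (2 ^ n * b + bestApproxTail m F j z) ∂ν := by
        gcongr 1
        refine lintegral_mono_ae ?_
        filter_upwards [ae_restrict_of_ae hν.ae_mem, ae_restrict_mem measurableSet_closedBall]
          with z hz hzB
        refine (htelescope F hF hvanish z hz (j + 1) P hP).trans ?_
        gcongr
        · exact ballMean_dyadicRadius_succ_le hzB
        · exact le_add_self.trans_eq (bestApproxTail_eq_add m F j z).symm
    _ = C * (2 ^ n * b * (𝔴 d (j + 1) * ν B) + 𝔴 d (j + 1) * I) := by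
        rw [lintegral_const_mul' _ _ hC, lintegral_add_left measurable_const, setLIntegral_const]
        ring
    _ ≤ C * (2 ^ n * b * (𝔴 d (j + 1) * (K * 𝔴 (-d) (j + 1))) + 𝔴 d (j + 1) * I) := by
        gcongr
        exact hν.measure_closedBall_dyadicRadius_le w j
    _ = C * (2 ^ n * K * b + 𝔴 d (j + 1) * I) := by
        rw [mul_left_comm (𝔴 d _), mul_comm (𝔴 d _) (𝔴 _ _), dyadicWeight_neg_mul]
        ring

lemma exists_ballMean_le_bestApproxTail (hn : 0 < n) (hd : 0 < d) (hnd : (n : ℝ) - 1 < d) (m : ℕ)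
    (hK : K ≠ ∞) (hμ : μ ≤ volume) (hthick : LowerRegularOn Γ n K μ)
    (hν : AhlforsRegular Γ d K ν) :
    ∃ C ≠ ∞, ∀ F : Rn n → ℝ, Measurable F → VanishesNear Γ μ F → ∀ w ∈ Γ, ∀ j,
      ballMean F w (𝔯 (j + 1)) ≤ C * (bestApproxTail m F j w +
        𝔴 d (j + 1) * ∫⁻ z in closedBall w (𝔯 (j + 1)), bestApproxTail m F j z ∂ν) := by
  obtain ⟨A, hA, hboundary⟩ := exists_setLIntegral_enorm_eval_le hn m hK hμ hthick hν
  obtain ⟨B, hB, hmarkov⟩ := hν.exists_ballMean_eval_le hd hnd m hK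
  refine ⟨2 ^ n + B * (A * (2 ^ n * K)) + B * A, by finiteness, fun F hF hvanish w hw j => ?_⟩
  set I := ∫⁻ z in closedBall w (𝔯 (j + 1)), bestApproxTail m F j z ∂ν
  have hbest : ballMean F w (𝔯 (j + 1)) ≤
      B * A * (𝔴 d (j + 1) * I) + (2 ^ n + B * (A * (2 ^ n * K))) * bestApprox m F w (𝔯 j) := by
    refine le_add_mul_bestApprox (by finiteness) fun P hP => ?_
    have hP' : Measurable fun z => MvPolynomial.eval z P :=
      (MvPolynomial.continuous_eval P).measurable
    set b := ballMean (fun z => F z - MvPolynomial.eval z P) w (𝔯 j)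
    calc ballMean F w (𝔯 (j + 1))
        = ballMean ((fun z => F z - MvPolynomial.eval z P) + fun z => MvPolynomial.eval z P) w
            (𝔯 (j + 1)) := by congr 1; ext z; simp
      _ ≤ ballMean (fun z => F z - MvPolynomial.eval z P) w (𝔯 (j + 1)) +
            ballMean (fun z => MvPolynomial.eval z P) w (𝔯 (j + 1)) :=
          ballMean_add_le (hF.sub hP')
      _ ≤ 2 ^ n * b + B * (A * (2 ^ n * K * b + 𝔴 d (j + 1) * I)) := by
          grw [hmarkov w hw j P hP, hboundary F hF hvanish w j P hP]
          gcongr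
          exact ballMean_dyadicRadius_succ_le (mem_closedBall_self (dyadicRadius_pos _).le)
      _ = B * A * (𝔴 d (j + 1) * I) + (2 ^ n + B * (A * (2 ^ n * K))) * b := by ring
  refine hbest.trans ?_
  rw [add_comm, mul_add]
  exact add_le_add (mul_le_mul' le_self_add
    (le_self_add.trans_eq (bestApproxTail_eq_add m F j w).symm)) (mul_le_mul_left le_add_self _)

end BoundaryMeans

section BoundaryIntegrals

variable {n : ℕ} {Γ : Set (Rn n)} {μ ν : Measure (Rn n)} {K : ℝ≥0∞} {d p : ℝ}

lemma exists_lintegral_bestApproxTail_rpow_le (m : ℕ) (ν : Measure (Rn n)) (hp : 1 < p) {γ : ℝ}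
    (hγ : 0 < γ) :
    ∃ C ≠ ∞, ∀ F : Rn n → ℝ, Measurable F → ∀ j, ∫⁻ w, bestApproxTail m F j w ^ p ∂ν ≤
      C * ∑' l, 𝔴 γ l * ∫⁻ w, bestApprox m F w (𝔯 (j + l)) ^ p ∂ν := by
  obtain ⟨C, hC, hsum⟩ := exists_tsum_rpow_le_tsum_dyadicWeight hp hγ
  refine ⟨C, hC, fun F hF j => ?_⟩
  have hmeas : ∀ l, Measurable fun w => bestApprox m F w (𝔯 (j + l)) ^ p := fun l =>
    (measurable_bestApprox_left hF _).pow_const p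
  calc ∫⁻ w, bestApproxTail m F j w ^ p ∂ν
      ≤ ∫⁻ w, C * ∑' l, 𝔴 γ l * bestApprox m F w (𝔯 (j + l)) ^ p ∂ν :=
        lintegral_mono fun w => hsum _
    _ = C * ∑' l, 𝔴 γ l * ∫⁻ w, bestApprox m F w (𝔯 (j + l)) ^ p ∂ν := by
        rw [lintegral_const_mul' _ _ hC,
          lintegral_tsum fun l => ((hmeas l).const_mul _).aemeasurable]
        congr! 3 with l
        exact lintegral_const_mul _ (hmeas l)

lemma exists_lintegral_ballMean_rpow_le_bestApproxTail [SFinite ν] (hn : 0 < n) (hd : 0 < d)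
    (hnd : (n : ℝ) - 1 < d) (m : ℕ) (hp : 1 ≤ p) (hK : K ≠ ∞) (hμ : μ ≤ volume)
    (hthick : LowerRegularOn Γ n K μ) (hν : AhlforsRegular Γ d K ν) :
    ∃ C ≠ ∞, ∀ F : Rn n → ℝ, Measurable F → VanishesNear Γ μ F → ∀ j,
      ∫⁻ w, ballMean F w (𝔯 (j + 1)) ^ p ∂ν ≤ C * ∫⁻ w, bestApproxTail m F j w ^ p ∂ν := by
  have hp0 : 0 ≤ p := by linarith
  obtain ⟨C, hC, hmean⟩ := exists_ballMean_le_bestApproxTail hn hd hnd m hK hμ hthick hν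
  refine ⟨C ^ p * 2 ^ (p - 1) * (1 + K ^ p), by finiteness, fun F hF hvanish j => ?_⟩
  have hTm := measurable_bestApproxTail (m := m) hF j
  set T := bestApproxTail m F j
  set M : Rn n → ℝ≥0∞ := fun w => 𝔴 d (j + 1) * ∫⁻ z in closedBall w (𝔯 (j + 1)), T z ∂ν
  have hM : ∫⁻ w, M w ^ p ∂ν ≤ K ^ p * ∫⁻ w, T w ^ p ∂ν := by
    have := lintegral_inv_mul_setLIntegral_closedBall_rpow_le hp (dyadicWeight_ne_zero (-d) (j + 1))
      (dyadicWeight_ne_top (-d) (j + 1))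
      (fun w => hν.measure_closedBall_dyadicRadius_le w j) hTm
    rwa [dyadicWeight_inv, neg_neg] at this
  calc ∫⁻ w, ballMean F w (𝔯 (j + 1)) ^ p ∂ν
      ≤ ∫⁻ w, C ^ p * (2 ^ (p - 1) * (T w ^ p + M w ^ p)) ∂ν := by
        refine lintegral_mono_ae (hν.ae_mem.mono fun w hw => ?_)
        grw [hmean F hF hvanish w hw j, ENNReal.mul_rpow_of_nonneg _ _ hp0,
          ENNReal.rpow_add_le_mul_rpow_add_rpow _ _ hp]
    _ = C ^ p * 2 ^ (p - 1) * (∫⁻ w, T w ^ p ∂ν + ∫⁻ w, M w ^ p ∂ν) := by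
        rw [lintegral_const_mul' _ _ (by finiteness), lintegral_const_mul' _ _ (by finiteness),
          lintegral_add_left (hTm.pow_const p), mul_assoc]
    _ ≤ C ^ p * 2 ^ (p - 1) * (1 + K ^ p) * ∫⁻ w, T w ^ p ∂ν := by
        grw [hM]
        exact le_of_eq (by ring)

lemma exists_tsum_dyadicWeight_mul_tsum_add_le {τ : ℝ} (hτ : 0 < τ) :
    ∃ C ≠ ∞, ∀ N : ℕ → ℝ≥0∞,
      ∑' i, 𝔴 τ i * ∑' l, 𝔴 (τ / 2) l * N (i + l) ≤ C * ∑' k, 𝔴 τ k * N k := by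
  refine ⟨∑' l, 𝔴 (-(τ / 2)) l, tsum_dyadicWeight_neg_ne_top (half_pos hτ), fun N => ?_⟩
  calc ∑' i, 𝔴 τ i * ∑' l, 𝔴 (τ / 2) l * N (i + l)
      = ∑' i, ∑' l, 𝔴 (-(τ / 2)) l * (𝔴 τ (i + l) * N (i + l)) := by
        simp_rw [← ENNReal.tsum_mul_left]
        congr! 4 with i l
        rw [dyadicWeight_add_right, show 𝔴 τ l = 𝔴 (τ / 2) l * 𝔴 (τ / 2) l by
          rw [← dyadicWeight_add_left, add_halves], show ∀ a b c e : ℝ≥0∞,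
          a * (b * (c * c) * e) = a * c * (b * (c * e)) from fun a b c e => by ring,
          dyadicWeight_neg_mul, one_mul]
    _ = ∑' l, 𝔴 (-(τ / 2)) l * ∑' i, 𝔴 τ (i + l) * N (i + l) := by
        rw [ENNReal.tsum_comm]
        simp_rw [ENNReal.tsum_mul_left]
    _ ≤ ∑' l, 𝔴 (-(τ / 2)) l * ∑' k, 𝔴 τ k * N k := by
        refine ENNReal.tsum_le_tsum fun l => ?_
        gcongr 1
        exact ENNReal.tsum_comp_le_tsum_of_injective (add_left_injective l) fun k => 𝔴 τ k * N k
    _ = (∑' l, 𝔴 (-(τ / 2)) l) * ∑' k, 𝔴 τ k * N k := ENNReal.tsum_mul_right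

lemma exists_tsum_lintegral_ballMean_rpow_le [SFinite ν] (hn : 0 < n) (hd : 0 < d)
    (hnd : (n : ℝ) - 1 < d) (m : ℕ) (hp : 1 < p) {τ : ℝ} (hτ : 0 < τ) (hK : K ≠ ∞)
    (hμ : μ ≤ volume) (hthick : LowerRegularOn Γ n K μ) (hν : AhlforsRegular Γ d K ν) :
    ∃ C ≠ ∞, ∀ F : Rn n → ℝ, Measurable F → VanishesNear Γ μ F →
      ∑' i, 𝔴 τ i * ∫⁻ w, ballMean F w (𝔯 (i + 3)) ^ p ∂ν ≤
        C * ∑' k, 𝔴 τ k * ∫⁻ w, bestApprox m F w (𝔯 (k + 2)) ^ p ∂ν := by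
  obtain ⟨A, hA, hmean⟩ :=
    exists_lintegral_ballMean_rpow_le_bestApproxTail hn hd hnd m hp.le hK hμ hthick hν
  obtain ⟨B, hB, htail⟩ := exists_lintegral_bestApproxTail_rpow_le m ν hp (half_pos hτ)
  obtain ⟨C, hC, hsum⟩ := exists_tsum_dyadicWeight_mul_tsum_add_le hτ
  refine ⟨A * B * C, by finiteness, fun F hF hvanish => ?_⟩
  set N : ℕ → ℝ≥0∞ := fun k => ∫⁻ w, bestApprox m F w (𝔯 (k + 2)) ^ p ∂ν
  calc ∑' i, 𝔴 τ i * ∫⁻ w, ballMean F w (𝔯 (i + 3)) ^ p ∂ν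
      ≤ ∑' i, 𝔴 τ i * (A * (B * ∑' l, 𝔴 (τ / 2) l * N (i + l))) := by
        gcongr with i
        refine (hmean F hF hvanish (i + 2)).trans ?_
        gcongr
        simpa only [N, add_right_comm] using htail F hF (i + 2)
    _ = A * B * ∑' i, 𝔴 τ i * ∑' l, 𝔴 (τ / 2) l * N (i + l) := by
        rw [← ENNReal.tsum_mul_left]
        congr! 2 with i
        ring
    _ ≤ A * B * (C * ∑' k, 𝔴 τ k * N k) := by grw [hsum N]
    _ = A * B * C * ∑' k, 𝔴 τ k * N k := by ring

end BoundaryIntegrals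

section NearBoundary

variable {n : ℕ} {Γ : Set (Rn n)} {ν : Measure (Rn n)} {K : ℝ≥0∞} {d p : ℝ}

lemma isLowerSet_setOf_mem_thickening_dyadicRadius {X : Type*} [PseudoEMetricSpace X] (E : Set X)
    (x : X) (k : ℕ) : IsLowerSet {i | x ∈ thickening (𝔯 (i + k)) E} := fun i j hji hi =>
  thickening_mono (dyadicRadius_anti (by omega)) E hi

lemma AhlforsRegular.dyadicWeight_le_measure_closedBall (hν : AhlforsRegular Γ d K ν) {x : Rn n}
    {j : ℕ} (hx : x ∈ thickening (𝔯 (j + 1)) Γ) :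
    𝔴 (-d) (j + 1) ≤ K * ν (closedBall x (𝔯 j)) := by
  obtain ⟨w, hw, hxw⟩ := mem_thickening_iff.1 hx
  rw [← ofReal_dyadicRadius_rpow]
  refine (hν.lower w hw _ (dyadicRadius_pos _) (dyadicRadius_le_one _)).trans ?_
  gcongr
  refine closedBall_subset_closedBall' ?_
  rw [dyadicRadius_succ] at hxw ⊢
  linarith [dist_comm x w]

lemma volume_closedBall_dyadicRadius (x : Rn n) (j : ℕ) :
    volume (closedBall x (𝔯 j)) = 2 ^ n * 𝔴 (-n) j := by
  rw [volume_closedBall_eq_mul_rpow x (dyadicRadius_pos j).le, ofReal_dyadicRadius_rpow]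

lemma AhlforsRegular.setLIntegral_thickening_le [SFinite ν] (hν : AhlforsRegular Γ d K ν)
    {f g : Rn n → ℝ≥0∞} (hg : Measurable g) {j : ℕ}
    (hfg : ∀ x, ∀ w ∈ closedBall x (𝔯 j), f x ≤ g w) :
    ∫⁻ x in thickening (𝔯 (j + 1)) Γ, f x ≤
      K * 2 ^ n * 𝔴 n 1 * 𝔴 (-(n - d)) (j + 1) * ∫⁻ w, g w ∂ν := by
  have hmeas : Measurable fun x => ∫⁻ w in closedBall x (𝔯 j), g w ∂ν :=
    Measurable.of_uncurry_right (f := fun x r => ∫⁻ w in closedBall x r, g w ∂ν)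
      (measurable_setLIntegral_closedBall ν hg)
  have hbound : 𝔴 (-d) (j + 1) * ∫⁻ x in thickening (𝔯 (j + 1)) Γ, f x ≤
      K * (2 ^ n * 𝔴 (-n) j) * ∫⁻ w, g w ∂ν := by
    calc 𝔴 (-d) (j + 1) * ∫⁻ x in thickening (𝔯 (j + 1)) Γ, f x
        = ∫⁻ x in thickening (𝔯 (j + 1)) Γ, 𝔴 (-d) (j + 1) * f x :=
          (lintegral_const_mul' _ _ (dyadicWeight_ne_top _ _)).symm
      _ ≤ ∫⁻ x in thickening (𝔯 (j + 1)) Γ, K * ∫⁻ w in closedBall x (𝔯 j), g w ∂ν := by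
          refine setLIntegral_mono' isOpen_thickening.measurableSet fun x hx => ?_
          grw [hν.dyadicWeight_le_measure_closedBall hx, mul_assoc, mul_comm (ν _),
            ← setLIntegral_const, setLIntegral_mono' measurableSet_closedBall (hfg x)]
      _ ≤ ∫⁻ x, K * ∫⁻ w in closedBall x (𝔯 j), g w ∂ν := setLIntegral_le_lintegral _ _
      _ = K * (2 ^ n * 𝔴 (-n) j) * ∫⁻ w, g w ∂ν := by
          rw [lintegral_const_mul _ hmeas, lintegral_setLIntegral_closedBall volume hg]
          simp_rw [volume_closedBall_dyadicRadius]
          rw [lintegral_mul_const _ hg]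
          ring
  calc ∫⁻ x in thickening (𝔯 (j + 1)) Γ, f x
      = 𝔴 d (j + 1) * (𝔴 (-d) (j + 1) * ∫⁻ x in thickening (𝔯 (j + 1)) Γ, f x) := by
        rw [← mul_assoc, mul_comm (𝔴 d _), dyadicWeight_neg_mul, one_mul]
    _ ≤ 𝔴 d (j + 1) * (K * (2 ^ n * 𝔴 (-n) j) * ∫⁻ w, g w ∂ν) := by grw [hbound]
    _ = K * 2 ^ n * 𝔴 n 1 * 𝔴 (-(n - d)) (j + 1) * ∫⁻ w, g w ∂ν := by
        have hcancel : 𝔴 (-n) j = 𝔴 n 1 * 𝔴 (-n) (j + 1) := by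
          rw [dyadicWeight_add_right, mul_comm, mul_assoc, dyadicWeight_neg_mul, mul_one]
        rw [hcancel, show -((n : ℝ) - d) = d + -n by ring, dyadicWeight_add_left]
        ring

lemma AhlforsRegular.exists_setLIntegral_ballMean_rpow_le [SFinite ν] (hν : AhlforsRegular Γ d K ν)
    (hp : 0 ≤ p) (hK : K ≠ ∞) :
    ∃ C ≠ ∞, ∀ F : Rn n → ℝ, Measurable F → ∀ i l,
      ∫⁻ x in thickening (𝔯 (i + 5 + l)) Γ, ballMean F x (𝔯 (i + 5)) ^ p ≤
        C * 𝔴 (-(n - d)) (i + l) * ∫⁻ w, ballMean F w (𝔯 (i + 3)) ^ p ∂ν := by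
  have h4 : ((4 : ℝ≥0∞) ^ n) ^ p ≠ ∞ := ENNReal.rpow_ne_top_of_nonneg hp (by finiteness)
  refine ⟨K * 2 ^ n * 𝔴 n 1 * (4 ^ n) ^ p * 𝔴 (-(n - d)) 5,
    by finiteness [dyadicWeight_ne_top (n : ℝ) 1, dyadicWeight_ne_top (-(n - d)) 5],
    fun F hF i l => ?_⟩
  have hcompare : ∀ x, ∀ w ∈ closedBall x (𝔯 (i + 4 + l)),
      ballMean F x (𝔯 (i + 5)) ^ p ≤ (4 ^ n) ^ p * ballMean F w (𝔯 (i + 3)) ^ p := by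
    intro x w hw
    rw [← ENNReal.mul_rpow_of_nonneg _ _ hp]
    gcongr
    refine (ballMean_dyadicRadius_succ_le (mem_closedBall_self (dyadicRadius_pos _).le)).trans ?_
    grw [ballMean_dyadicRadius_succ_le (w := w) (j := i + 3)]
    · rw [← mul_assoc, ← mul_pow]
      norm_num
    · exact closedBall_subset_closedBall (dyadicRadius_anti le_self_add) (mem_closedBall_comm.1 hw)
  have := hν.setLIntegral_thickening_le
    (((measurable_ballMean_left hF _).pow_const p).const_mul _) hcompare
  rw [lintegral_const_mul' _ _ h4] at this
  rw [show i + 5 + l = i + 4 + l + 1 by ring]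
  refine this.trans_eq ?_
  rw [show i + 4 + l + 1 = i + l + 5 by ring, dyadicWeight_add_right _ (i + l)]
  ring

lemma exists_lintegral_tsum_indicator_thickening_rpow_le (hp : 1 < p) {γ : ℝ} (hγ : 0 < γ) (s : ℝ)
    (Γ : Set (Rn n)) :
    ∃ C ≠ ∞, ∀ b : ℕ → Rn n → ℝ≥0∞, (∀ i, Measurable (b i)) →
      ∫⁻ x, (∑' i, {i | x ∈ thickening (𝔯 (i + 5)) Γ}.indicator (fun i => 𝔴 s i * b i x) i) ^ p ≤
        C * ∑' i, ∑' l, 𝔴 (s * p) i * 𝔴 γ l *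
          ∫⁻ x in thickening (𝔯 (i + 5 + l)) Γ, b i x ^ p := by
  obtain ⟨C, hC, hsum⟩ := exists_tsum_indicator_rpow_le hp hγ
  refine ⟨C, hC, fun b hb => ?_⟩
  have hpoint : ∀ x,
      (∑' i, {i | x ∈ thickening (𝔯 (i + 5)) Γ}.indicator (fun i => 𝔴 s i * b i x) i) ^ p ≤
        C * ∑' i, ∑' l, 𝔴 (s * p) i * 𝔴 γ l *
          (thickening (𝔯 (i + 5 + l)) Γ).indicator (fun x => b i x ^ p) x := by
    intro x
    refine (hsum _ _ (isLowerSet_setOf_mem_thickening_dyadicRadius Γ x 5)).trans_eq ?_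
    simp_rw [← ENNReal.tsum_mul_left]
    congr! 5 with i l
    rw [ENNReal.mul_rpow_of_nonneg _ _ (by linarith), dyadicWeight_rpow]
    by_cases hx : x ∈ thickening (𝔯 (i + 5 + l)) Γ
    · rw [indicator_of_mem hx, indicator_of_mem (by simpa [add_right_comm] using hx)]
      ring
    · rw [indicator_of_notMem hx, indicator_of_notMem (by simpa [add_right_comm] using hx)]
      simp
  have hmeas : ∀ i l, Measurable ((thickening (𝔯 (i + 5 + l)) Γ).indicator fun x => b i x ^ p) :=
    fun i l => ((hb i).pow_const p).indicator isOpen_thickening.measurableSet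
  refine (lintegral_mono hpoint).trans_eq ?_
  rw [lintegral_const_mul' _ _ hC, lintegral_tsum fun i => by fun_prop]
  congr! 3 with i
  rw [lintegral_tsum fun l => by fun_prop]
  congr! 2 with l
  rw [lintegral_const_mul _ (hmeas i l), lintegral_indicator isOpen_thickening.measurableSet]

/-- The weighted sum `∑ 2^(s i) ⨍_{Q(x, 2^(-i-5))} |F|` over the generations `i` for which the cube
can reach `Γ`: the contribution of the scales at which `Γ` is visible from `x`. -/
def nearMeanSum (Γ : Set (Rn n)) (s : ℝ) (F : Rn n → ℝ) (x : Rn n) : ℝ≥0∞ :=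
  ∑' i, {i | x ∈ thickening (𝔯 (i + 5)) Γ}.indicator
    (fun i => 𝔴 s i * ballMean F x (𝔯 (i + 5))) i

lemma AhlforsRegular.exists_lintegral_nearMeanSum_rpow_le [SFinite ν]
    (hν : AhlforsRegular Γ d K ν) (hdn : d < n) (hp : 1 < p) (hK : K ≠ ∞) {s τ : ℝ}
    (hτ : s * p = τ + (n - d)) :
    ∃ C ≠ ∞, ∀ F : Rn n → ℝ, Measurable F →
      ∫⁻ x, nearMeanSum Γ s F x ^ p ≤
        C * ∑' i, 𝔴 τ i * ∫⁻ w, ballMean F w (𝔯 (i + 3)) ^ p ∂ν := by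
  have hγ : 0 < (n - d) / 2 := by linarith
  obtain ⟨A, hA, hnear⟩ := hν.exists_setLIntegral_ballMean_rpow_le (p := p) (by linarith) hK
  obtain ⟨B, hB, hsum⟩ := exists_lintegral_tsum_indicator_thickening_rpow_le hp hγ s Γ
  set S := ∑' l, 𝔴 (-((n - d) / 2)) l
  have hS : S ≠ ∞ := tsum_dyadicWeight_neg_ne_top hγ
  refine ⟨B * A * S, by finiteness, fun F hF => ?_⟩
  set I : ℕ → ℝ≥0∞ := fun i => ∫⁻ w, ballMean F w (𝔯 (i + 3)) ^ p ∂ν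
  have hweight : ∀ i l, 𝔴 (s * p) i * 𝔴 ((n - d) / 2) l * 𝔴 (-(n - d)) (i + l) =
      𝔴 τ i * 𝔴 (-((n - d) / 2)) l := fun i l => by
    rw [dyadicWeight_add_right, mul_mul_mul_comm, ← dyadicWeight_add_left, ← dyadicWeight_add_left,
      hτ]
    congr 2 <;> ring
  calc ∫⁻ x, nearMeanSum Γ s F x ^ p
      ≤ B * ∑' i, ∑' l, 𝔴 (s * p) i * 𝔴 ((n - d) / 2) l *
          (A * 𝔴 (-(n - d)) (i + l) * I i) := by
        refine (hsum _ fun i => measurable_ballMean_left hF (𝔯 (i + 5))).trans ?_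
        gcongr with i l
        exact hnear F hF i l
    _ = B * ∑' i, ∑' l, A * (𝔴 τ i * I i) * 𝔴 (-((n - d) / 2)) l := by
        congr! 5 with i l
        calc _ = 𝔴 (s * p) i * 𝔴 ((n - d) / 2) l * 𝔴 (-(n - d)) (i + l) * (A * I i) := by ring
          _ = _ := by rw [hweight]; ring
    _ = B * A * S * ∑' i, 𝔴 τ i * I i := by
        simp_rw [ENNReal.tsum_mul_left, ENNReal.tsum_mul_right, ENNReal.tsum_mul_left]
        ring

end NearBoundary

section Porosity

lemma tsum_measure_sdiff_add_le {X : Type*} [MeasurableSpace X] (μ : Measure X) {U : ℕ → Set X}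
    (hU : Antitone U) (hm : ∀ k, MeasurableSet (U k)) (a : ℕ) :
    ∑' k, μ (U k \ U (k + a)) ≤ a * μ univ := by
  induction a with
  | zero => simp
  | succ a ih =>
    have hdisjoint : Pairwise fun i j =>
        Disjoint (U (i + a) \ U (i + a + 1)) (U (j + a) \ U (j + a + 1)) :=
      (pairwise_disjoint_on _).2 fun i j hij => disjoint_sdiff_left.mono_right
        (sdiff_subset.trans (hU (show i + a + 1 ≤ j + a by omega)))
    calc ∑' k, μ (U k \ U (k + (a + 1)))
        ≤ ∑' k, (μ (U k \ U (k + a)) + μ (U (k + a) \ U (k + a + 1))) := by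
          gcongr with k
          exact (measure_mono (sdiff_triangle _ _ _)).trans (measure_union_le _ _)
      _ ≤ a * μ univ + μ univ := by
          rw [ENNReal.tsum_add]
          exact add_le_add ih (tsum_measure_le_measure_univ
            (fun k => ((hm _).diff (hm _)).nullMeasurableSet)
            fun i j hij => (hdisjoint hij).aedisjoint)
      _ = (a + 1 : ℕ) * μ univ := by push_cast; ring

variable {n : ℕ} {Γ : Set (Rn n)} {ν : Measure (Rn n)} {K : ℝ≥0∞} {d p : ℝ}

lemma AhlforsRegular.exists_volume_closedBall_inter_thickening_le [SFinite ν]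
    (hν : AhlforsRegular Γ d K ν) (hK : K ≠ ∞) :
    ∃ C ≠ ∞, ∀ (w : Rn n) (k a : ℕ),
      volume (closedBall w (𝔯 (k + 2)) ∩ thickening (𝔯 (k + 2 + (a + 1))) Γ) ≤
        C * 𝔴 (-(n - d)) (a + 1) * 𝔴 (-n) (k + 2) := by
  refine ⟨K * 2 ^ n * 𝔴 n 1 * K * 𝔴 d 1,
    by finiteness [dyadicWeight_ne_top n 1, dyadicWeight_ne_top d 1], fun w k a => ?_⟩
  have hcompare : ∀ x, ∀ z ∈ closedBall x (𝔯 (k + 2 + a)),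
      (closedBall w (𝔯 (k + 2))).indicator (1 : Rn n → ℝ≥0∞) x ≤
        (closedBall w (𝔯 (k + 1))).indicator 1 z := by
    intro x z hz
    by_cases hx : x ∈ closedBall w (𝔯 (k + 2))
    · have hz' : z ∈ closedBall w (𝔯 (k + 1)) := by
        have hle : 𝔯 (k + 2 + a) ≤ 𝔯 (k + 2) := dyadicRadius_anti le_self_add
        rw [mem_closedBall] at *
        linarith [dist_triangle z x w, dyadicRadius_succ (k + 1)]
      simp [hx, hz']
    · simp [hx]
  calc volume (closedBall w (𝔯 (k + 2)) ∩ thickening (𝔯 (k + 2 + (a + 1))) Γ)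
      = ∫⁻ x in thickening (𝔯 (k + 2 + a + 1)) Γ, (closedBall w (𝔯 (k + 2))).indicator 1 x := by
        rw [lintegral_indicator_one measurableSet_closedBall,
          Measure.restrict_apply measurableSet_closedBall, ← add_assoc]
    _ ≤ K * 2 ^ n * 𝔴 n 1 * 𝔴 (-(n - d)) (k + 2 + a + 1) * ν (closedBall w (𝔯 (k + 1))) := by
        rw [← lintegral_indicator_one measurableSet_closedBall]
        exact hν.setLIntegral_thickening_le (measurable_one.indicator measurableSet_closedBall)
          hcompare
    _ ≤ K * 2 ^ n * 𝔴 n 1 * 𝔴 (-(n - d)) (k + 2 + a + 1) * (K * 𝔴 (-d) (k + 1)) := by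
        grw [hν.measure_closedBall_dyadicRadius_le]
    _ = K * 2 ^ n * 𝔴 n 1 * K * 𝔴 d 1 * 𝔴 (-(n - d)) (a + 1) * 𝔴 (-n) (k + 2) := by
        have hcancel : 𝔴 (-d) (k + 1) = 𝔴 d 1 * 𝔴 (-d) (k + 2) := by
          rw [dyadicWeight_add_right _ (k + 1) 1, mul_comm, mul_assoc, dyadicWeight_neg_mul,
            mul_one]
        rw [hcancel, add_assoc (k + 2), dyadicWeight_add_right _ (k + 2),
          show 𝔴 (-n) (k + 2) = 𝔴 (-(n - d)) (k + 2) * 𝔴 (-d) (k + 2) by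
            rw [← dyadicWeight_add_left]; congr 1; ring]
        ring

lemma AhlforsRegular.exists_le_volume_closedBall_sdiff_thickening [SFinite ν]
    (hν : AhlforsRegular Γ d K ν) (hn : 0 < n) (hdn : d < n) (hK : K ≠ ∞) :
    ∃ a : ℕ, ∀ (w : Rn n) (k : ℕ),
      𝔴 (-n) (k + 2) ≤ volume (closedBall w (𝔯 (k + 2)) \ thickening (𝔯 (k + 1 + a)) Γ) := by
  obtain ⟨C, hC, hinter⟩ := hν.exists_volume_closedBall_inter_thickening_le hK
  have hlim : Tendsto (fun a => C * 𝔴 (-(n - d)) (a + 1)) atTop (𝓝 0) := by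
    have hweight := ENNReal.tendsto_atTop_zero_of_tsum_ne_top
      (tsum_dyadicWeight_neg_ne_top (sub_pos.2 hdn))
    simpa using ENNReal.Tendsto.const_mul (hweight.comp (tendsto_add_atTop_nat 1)) (.inr hC)
  obtain ⟨a, ha⟩ := (hlim.eventually_le_const one_pos).exists
  refine ⟨a + 2, fun w k => ?_⟩
  rw [show k + 1 + (a + 2) = k + 2 + (a + 1) by ring]
  have hsmall := (hinter w k a).trans (mul_le_of_le_one_left' ha)
  refine (ENNReal.add_le_add_iff_left (dyadicWeight_ne_top (-n) (k + 2))).1 ?_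
  calc 𝔴 (-n) (k + 2) + 𝔴 (-n) (k + 2) ≤ 2 ^ n * 𝔴 (-n) (k + 2) := by
        rw [← two_mul]
        gcongr
        exact le_self_pow₀ one_le_two hn.ne'
    _ = volume (closedBall w (𝔯 (k + 2))) := (volume_closedBall_dyadicRadius w _).symm
    _ = _ := (measure_inter_add_sdiff _ (isOpen_thickening (δ := 𝔯 (k + 2 + (a + 1)))
        (E := Γ)).measurableSet).symm
    _ ≤ _ := by gcongr

lemma AhlforsRegular.lintegral_le_setLIntegral_sdiff_thickening [SFinite ν]
    (hν : AhlforsRegular Γ d K ν) {k a : ℕ}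
    (ha : ∀ w, 𝔴 (-n) (k + 2) ≤
      volume (closedBall w (𝔯 (k + 2)) \ thickening (𝔯 (k + 1 + a)) Γ))
    {f g : Rn n → ℝ≥0∞} (hg : Measurable g) (hfg : ∀ w, ∀ x ∈ closedBall w (𝔯 (k + 2)), f w ≤ g x) :
    ∫⁻ w, f w ∂ν ≤ K * 𝔴 (n - d) (k + 2) *
      ∫⁻ x in thickening (𝔯 (k + 1)) Γ \ thickening (𝔯 (k + 1 + a)) Γ, g x := by
  set D := thickening (𝔯 (k + 1)) Γ \ thickening (𝔯 (k + 1 + a)) Γ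
  have hD : MeasurableSet D := isOpen_thickening.measurableSet.diff isOpen_thickening.measurableSet
  have hbound : 𝔴 (-n) (k + 2) * ∫⁻ w, f w ∂ν ≤ K * 𝔴 (-d) (k + 2) * ∫⁻ x in D, g x := by
    calc 𝔴 (-n) (k + 2) * ∫⁻ w, f w ∂ν
        = ∫⁻ w, 𝔴 (-n) (k + 2) * f w ∂ν :=
          (lintegral_const_mul' _ _ (dyadicWeight_ne_top _ _)).symm
      _ ≤ ∫⁻ w, (∫⁻ x in closedBall w (𝔯 (k + 2)), D.indicator g x) ∂ν := by
          refine lintegral_mono_ae (hν.ae_mem.mono fun w hw => ?_)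
          set B := closedBall w (𝔯 (k + 2))
          have hsub : B \ thickening (𝔯 (k + 1 + a)) Γ ⊆ B ∩ D := fun x hx =>
            ⟨hx.1, mem_thickening_iff.2 ⟨w, hw, (mem_closedBall.1 hx.1).trans_lt
              (by linarith [dyadicRadius_succ (k + 1), dyadicRadius_pos (k + 1)])⟩, hx.2⟩
          calc 𝔴 (-n) (k + 2) * f w ≤ f w * volume (B ∩ D) := by
                grw [ha w, hsub, mul_comm]
            _ = ∫⁻ _ in B ∩ D, f w := (setLIntegral_const _ _).symm
            _ ≤ ∫⁻ x in B ∩ D, g x :=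
                setLIntegral_mono hg fun x hx => hfg w x hx.1
            _ = ∫⁻ x in B, D.indicator g x := by
                rw [setLIntegral_indicator hD, inter_comm]
      _ = ∫⁻ x, D.indicator g x * ν (closedBall x (𝔯 (k + 2))) :=
          lintegral_setLIntegral_closedBall ν (hg.indicator hD) _
      _ ≤ ∫⁻ x, D.indicator g x * (K * 𝔴 (-d) (k + 2)) := by
          gcongr with x
          exact hν.measure_closedBall_dyadicRadius_le x (k + 1)
      _ = K * 𝔴 (-d) (k + 2) * ∫⁻ x in D, g x := by
          rw [lintegral_mul_const _ (hg.indicator hD), lintegral_indicator hD, mul_comm]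
  calc ∫⁻ w, f w ∂ν
      = 𝔴 n (k + 2) * (𝔴 (-n) (k + 2) * ∫⁻ w, f w ∂ν) := by
        rw [← mul_assoc, mul_comm (𝔴 n _), dyadicWeight_neg_mul, one_mul]
    _ ≤ 𝔴 n (k + 2) * (K * 𝔴 (-d) (k + 2) * ∫⁻ x in D, g x) := by grw [hbound]
    _ = K * 𝔴 (n - d) (k + 2) * ∫⁻ x in D, g x := by
        rw [sub_eq_add_neg, dyadicWeight_add_left]
        ring

end Porosity

section SmoothnessFunction

variable {n m : ℕ} {F : Rn n → ℝ} {s q : ℝ}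

lemma volume_Ico_dyadicRadius (j : ℕ) :
    volume (Ico (𝔯 (j + 1)) (𝔯 j)) = ENNReal.ofReal (𝔯 (j + 1)) := by
  rw [Real.volume_Ico, dyadicRadius_succ]
  congr 1
  ring

lemma inv_two_le_setLIntegral_inv (j : ℕ) :
    2⁻¹ ≤ ∫⁻ t in Ico (𝔯 (j + 1)) (𝔯 j), ENNReal.ofReal t⁻¹ := by
  have hj := dyadicRadius_pos j
  calc (2 : ℝ≥0∞)⁻¹ = ∫⁻ _ in Ico (𝔯 (j + 1)) (𝔯 j), ENNReal.ofReal (𝔯 j)⁻¹ := by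
        rw [setLIntegral_const, volume_Ico_dyadicRadius, ← ENNReal.ofReal_mul (by positivity),
          dyadicRadius_succ, ← mul_div_assoc, inv_mul_cancel₀ hj.ne', one_div,
          ENNReal.ofReal_inv_of_pos two_pos, ENNReal.ofReal_ofNat]
    _ ≤ _ := setLIntegral_mono' measurableSet_Ico fun t ht => by
        gcongr
        · exact (dyadicRadius_pos _).trans_le ht.1
        · exact ht.2.le

lemma setLIntegral_inv_le_one (j : ℕ) :
    ∫⁻ t in Ico (𝔯 (j + 1)) (𝔯 j), ENNReal.ofReal t⁻¹ ≤ 1 := by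
  have hj := dyadicRadius_pos (j + 1)
  calc ∫⁻ t in Ico (𝔯 (j + 1)) (𝔯 j), ENNReal.ofReal t⁻¹
      ≤ ∫⁻ _ in Ico (𝔯 (j + 1)) (𝔯 j), ENNReal.ofReal (𝔯 (j + 1))⁻¹ :=
        setLIntegral_mono' measurableSet_Ico fun t ht => by
          gcongr
          exact ht.1
    _ = 1 := by
        rw [setLIntegral_const, volume_Ico_dyadicRadius, ← ENNReal.ofReal_mul (by positivity),
          inv_mul_cancel₀ hj.ne', ENNReal.ofReal_one]

lemma dyadicWeight_mul_bestApprox_le (hs : 0 ≤ s) {k : ℕ} {t : ℝ} (ht : t ∈ Ico (𝔯 (k + 1)) (𝔯 k))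
    (x : Rn n) : 𝔴 s k * bestApprox m F x (𝔯 (k + 1)) ≤
      2 ^ n * (ENNReal.ofReal (t ^ (-s)) * bestApprox m F x t) := by
  have ht0 : 0 < t := (dyadicRadius_pos _).trans_le ht.1
  have hbest : bestApprox m F x (𝔯 (k + 1)) ≤ 2 ^ n * bestApprox m F x t := by
    convert bestApprox_mono (m := m) (F := F) (x := x) (y := x) (r := t) (c := 2)
      (dyadicRadius_pos (k + 1)) (by simpa using ht.1)
      (by linarith [dyadicRadius_succ k, ht.2]) using 2
    simp [ENNReal.ofReal_pow]
  have hweight : 𝔴 s k ≤ ENNReal.ofReal (t ^ (-s)) := by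
    rw [← neg_neg s, ← ofReal_dyadicRadius_rpow, neg_neg]
    exact ENNReal.ofReal_le_ofReal (Real.rpow_le_rpow_of_nonpos ht0 ht.2.le (by linarith))
  grw [hbest, hweight]
  exact le_of_eq (by ring)

lemma dyadicWeight_mul_bestApprox_le_smoothnessFn (hs : 0 ≤ s) (hq : 1 ≤ q) (x : Rn n) (k : ℕ) :
    𝔴 s k * bestApprox m F x (𝔯 (k + 1)) ≤ 2 ^ (n + 1) * smoothnessFn m s q F x := by
  have hq0 : 0 < q := by linarith
  set Y := 𝔴 s k * bestApprox m F x (𝔯 (k + 1))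
  set I := ∫⁻ t in Ioo (0 : ℝ) 1,
    (ENNReal.ofReal (t ^ (-s)) * bestApprox m F x t) ^ q * ENNReal.ofReal t⁻¹
  have hslot : Ico (𝔯 (k + 1)) (𝔯 k) ⊆ Ioo 0 1 := fun t ht =>
    ⟨(dyadicRadius_pos _).trans_le ht.1, ht.2.trans_le (dyadicRadius_le_one k)⟩
  have hpow : Y ^ q * 2⁻¹ ≤ (2 ^ n) ^ q * I := by
    calc Y ^ q * 2⁻¹ ≤ Y ^ q * ∫⁻ t in Ico (𝔯 (k + 1)) (𝔯 k), ENNReal.ofReal t⁻¹ := by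
          grw [← inv_two_le_setLIntegral_inv k]
      _ = ∫⁻ t in Ico (𝔯 (k + 1)) (𝔯 k), Y ^ q * ENNReal.ofReal t⁻¹ :=
          (lintegral_const_mul _ (by fun_prop)).symm
      _ ≤ ∫⁻ t in Ico (𝔯 (k + 1)) (𝔯 k), (2 ^ n) ^ q *
            ((ENNReal.ofReal (t ^ (-s)) * bestApprox m F x t) ^ q * ENNReal.ofReal t⁻¹) := by
          refine setLIntegral_mono' measurableSet_Ico fun t ht => ?_
          have hY : Y ≤ 2 ^ n * (ENNReal.ofReal (t ^ (-s)) * bestApprox m F x t) :=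
            dyadicWeight_mul_bestApprox_le hs ht x
          grw [hY, ENNReal.mul_rpow_of_nonneg _ _ hq0.le, mul_assoc]
      _ ≤ (2 ^ n) ^ q * I := by
          rw [lintegral_const_mul' _ _ (ENNReal.rpow_ne_top_of_nonneg hq0.le (by finiteness))]
          grw [lintegral_mono_set hslot]
  have hpow' : Y ^ q ≤ (2 ^ (n + 1) * smoothnessFn m s q F x) ^ q := by
    have h_two : (2 : ℝ≥0∞) ≤ 2 ^ q := by
      simpa using ENNReal.rpow_le_rpow_of_exponent_le one_le_two hq
    calc Y ^ q = 2 * (Y ^ q * 2⁻¹) := by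
          rw [mul_left_comm, ENNReal.mul_inv_cancel two_ne_zero ENNReal.ofNat_ne_top, mul_one]
      _ ≤ 2 ^ q * ((2 ^ n) ^ q * I) := mul_le_mul' h_two hpow
      _ = (2 ^ (n + 1) * smoothnessFn m s q F x) ^ q := by
          rw [smoothnessFn, ENNReal.mul_rpow_of_nonneg _ _ hq0.le, pow_succ',
            ENNReal.mul_rpow_of_nonneg _ _ hq0.le, ← ENNReal.rpow_mul, one_div_mul_cancel hq0.ne',
            ENNReal.rpow_one, mul_assoc]
  exact (ENNReal.rpow_le_rpow_iff hq0).1 hpow'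

end SmoothnessFunction

section SmoothnessBound

variable {n m : ℕ} {Γ : Set (Rn n)} {ν : Measure (Rn n)} {K : ℝ≥0∞} {F : Rn n → ℝ}
  {d s p q τ : ℝ}

lemma dyadicWeight_mul_bestApprox_le_smoothnessFn_of_mem (hs : 0 ≤ s) (hq : 1 ≤ q) {w x : Rn n}
    {k : ℕ} (hx : x ∈ closedBall w (𝔯 (k + 2))) :
    𝔴 s k * bestApprox m F w (𝔯 (k + 2)) ≤ 2 ^ n * (2 ^ (n + 1) * smoothnessFn m s q F x) := by
  have hbest : bestApprox m F w (𝔯 (k + 2)) ≤ 2 ^ n * bestApprox m F x (𝔯 (k + 1)) := by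
    convert bestApprox_mono (m := m) (F := F) (x := w) (y := x) (r := 𝔯 (k + 1)) (c := 2)
      (dyadicRadius_pos (k + 2)) (by linarith [mem_closedBall'.1 hx, dyadicRadius_succ (k + 1)])
      (by linarith [dyadicRadius_succ (k + 1)]) using 2
    simp [ENNReal.ofReal_pow]
  grw [hbest, mul_left_comm, dyadicWeight_mul_bestApprox_le_smoothnessFn hs hq x k]

lemma AhlforsRegular.dyadicWeight_mul_lintegral_bestApprox_rpow_le [SFinite ν]
    (hν : AhlforsRegular Γ d K ν) (hp : 0 ≤ p) (hq : 1 ≤ q) (hs : 0 ≤ s)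
    (hτ : s * p = τ + (n - d)) {k a : ℕ}
    (ha : ∀ w, 𝔴 (-n) (k + 2) ≤
      volume (closedBall w (𝔯 (k + 2)) \ thickening (𝔯 (k + 1 + a)) Γ)) (hF : Measurable F) :
    𝔴 τ k * ∫⁻ w, bestApprox m F w (𝔯 (k + 2)) ^ p ∂ν ≤
      K * 𝔴 (n - d) 2 * (2 ^ n * 2 ^ (n + 1)) ^ p *
        ∫⁻ x in thickening (𝔯 (k + 1)) Γ \ thickening (𝔯 (k + 1 + a)) Γ,
          smoothnessFn m s q F x ^ p := by
  set c : ℝ≥0∞ := (2 ^ n * 2 ^ (n + 1)) ^ p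
  set D := thickening (𝔯 (k + 1)) Γ \ thickening (𝔯 (k + 1 + a)) Γ
  have hc : c ≠ ∞ := ENNReal.rpow_ne_top_of_nonneg hp (by finiteness)
  have hweight : 𝔴 (n - d) k * 𝔴 τ k = 𝔴 s k ^ p := by
    rw [dyadicWeight_rpow, hτ, dyadicWeight_add_left, mul_comm]
  have hbound : ∀ w, ∀ x ∈ closedBall w (𝔯 (k + 2)),
      (𝔴 s k * bestApprox m F w (𝔯 (k + 2))) ^ p ≤ c * smoothnessFn m s q F x ^ p := by
    intro w x hx
    grw [dyadicWeight_mul_bestApprox_le_smoothnessFn_of_mem hs hq hx, ← mul_assoc,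
      ENNReal.mul_rpow_of_nonneg _ _ hp]
  refine (ENNReal.mul_le_mul_iff_right (dyadicWeight_ne_zero (n - d) k)
    (dyadicWeight_ne_top (n - d) k)).1 ?_
  calc 𝔴 (n - d) k * (𝔴 τ k * ∫⁻ w, bestApprox m F w (𝔯 (k + 2)) ^ p ∂ν)
      = ∫⁻ w, (𝔴 s k * bestApprox m F w (𝔯 (k + 2))) ^ p ∂ν := by
        simp_rw [ENNReal.mul_rpow_of_nonneg (𝔴 s k) _ hp, ← hweight]
        rw [lintegral_const_mul' _ _ (ENNReal.mul_ne_top (dyadicWeight_ne_top _ _)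
          (dyadicWeight_ne_top _ _)), mul_assoc]
    _ ≤ K * 𝔴 (n - d) (k + 2) * ∫⁻ x in D, c * smoothnessFn m s q F x ^ p :=
        hν.lintegral_le_setLIntegral_sdiff_thickening ha
          (((measurable_smoothnessFn hF).pow_const p).const_mul c) hbound
    _ = 𝔴 (n - d) k *
          (K * 𝔴 (n - d) 2 * c * ∫⁻ x in D, smoothnessFn m s q F x ^ p) := by
        rw [lintegral_const_mul' _ _ hc, dyadicWeight_add_right]
        ring

lemma AhlforsRegular.exists_tsum_lintegral_bestApprox_rpow_le [SFinite ν]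
    (hν : AhlforsRegular Γ d K ν) (hn : 0 < n) (hdn : d < n) (hK : K ≠ ∞) (m : ℕ) (hp : 0 ≤ p)
    (hq : 1 ≤ q) (hs : 0 ≤ s) (hτ : s * p = τ + (n - d)) :
    ∃ C ≠ ∞, ∀ F : Rn n → ℝ, Measurable F →
      ∑' k, 𝔴 τ k * ∫⁻ w, bestApprox m F w (𝔯 (k + 2)) ^ p ∂ν ≤
        C * ∫⁻ x, smoothnessFn m s q F x ^ p := by
  obtain ⟨a, ha⟩ := hν.exists_le_volume_closedBall_sdiff_thickening hn hdn hK
  set c : ℝ≥0∞ := K * 𝔴 (n - d) 2 * (2 ^ n * 2 ^ (n + 1)) ^ p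
  have hc : c ≠ ∞ := ENNReal.mul_ne_top (by finiteness [dyadicWeight_ne_top (n - d) 2])
    (ENNReal.rpow_ne_top_of_nonneg hp (by finiteness))
  refine ⟨c * a, by finiteness, fun F hF => ?_⟩
  set U : ℕ → Set (Rn n) := fun k => thickening (𝔯 (k + 1)) Γ
  set H : Rn n → ℝ≥0∞ := fun x => smoothnessFn m s q F x ^ p
  have hU : Antitone U := fun i j hij =>
    thickening_mono (dyadicRadius_anti (Nat.add_le_add_right hij 1)) Γ
  have hUm (k : ℕ) : MeasurableSet (U k) := isOpen_thickening.measurableSet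
  calc ∑' k, 𝔴 τ k * ∫⁻ w, bestApprox m F w (𝔯 (k + 2)) ^ p ∂ν
      ≤ c * ∑' k, volume.withDensity H (U k \ U (k + a)) := by
        rw [← ENNReal.tsum_mul_left]
        refine ENNReal.tsum_le_tsum fun k => ?_
        rw [withDensity_apply _ ((hUm _).diff (hUm _))]
        have hscale := hν.dyadicWeight_mul_lintegral_bestApprox_rpow_le hp hq hs hτ
          (fun w => ha w k) (m := m) hF
        rwa [add_right_comm k] at hscale
    _ ≤ c * (a * ∫⁻ x, H x) := by
        grw [tsum_measure_sdiff_add_le _ hU hUm a, withDensity_apply _ .univ, setLIntegral_univ]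
    _ = c * a * ∫⁻ x, H x := (mul_assoc _ _ _).symm

end SmoothnessBound

section IndicatorSmoothness

variable {n m : ℕ} {F G : Rn n → ℝ} {Ω : Set (Rn n)} {x : Rn n} {s q : ℝ}

lemma exists_mem_Ico_dyadicRadius {t : ℝ} (ht : t ∈ Ioo 0 1) :
    ∃ i, t ∈ Ico (𝔯 (i + 1)) (𝔯 i) := by
  classical
  have hex : ∃ i, 𝔯 (i + 1) ≤ t := by
    obtain ⟨i, hi⟩ := exists_pow_lt_of_lt_one ht.1 (by norm_num : (1 / 2 : ℝ) < 1)
    exact ⟨i, (dyadicRadius_anti i.le_succ).trans hi.le⟩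
  refine ⟨Nat.find hex, Nat.find_spec hex, ?_⟩
  rcases h : Nat.find hex with _ | j
  · simpa [dyadicRadius] using ht.2
  · exact not_le.1 (Nat.find_min hex (m := j) (by omega))

lemma tsum_rpow_rpow_inv_le_tsum (hq : 1 ≤ q) (B : ℕ → ℝ≥0∞) :
    (∑' i, B i ^ q) ^ (1 / q) ≤ ∑' i, B i := by
  have hsplit (b : ℝ≥0∞) : b ^ q = b * b ^ (q - 1) := by
    conv_lhs => rw [← add_sub_cancel 1 q]
    rw [ENNReal.rpow_add_of_nonneg _ _ zero_le_one (by linarith), ENNReal.rpow_one]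
  rw [one_div, ENNReal.rpow_inv_le_iff (by linarith), hsplit (∑' i, B i),
    ← ENNReal.tsum_mul_right]
  refine ENNReal.tsum_le_tsum fun i => ?_
  rw [hsplit]
  gcongr
  exact ENNReal.le_tsum i

lemma smoothnessFn_le_add_tsum (hq : 1 ≤ q) {B : ℕ → ℝ≥0∞}
    (hB : ∀ i, ∀ t ∈ Ico (𝔯 (i + 1)) (𝔯 i), ENNReal.ofReal (t ^ (-s)) * bestApprox m G x t ≤
      max (ENNReal.ofReal (t ^ (-s)) * bestApprox m F x t) (B i)) :
    smoothnessFn m s q G x ≤ smoothnessFn m s q F x + ∑' i, B i := by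
  have hq0 : 0 < q := one_pos.trans_le hq
  set b : ℕ → ℝ → ℝ≥0∞ := fun i => (Ico (𝔯 (i + 1)) (𝔯 i)).indicator fun t =>
    B i ^ q * ENNReal.ofReal t⁻¹
  have hb (i : ℕ) : Measurable (b i) := by
    refine Measurable.indicator ?_ measurableSet_Ico
    fun_prop
  have hpoint : ∀ t ∈ Ioo (0 : ℝ) 1,
      (ENNReal.ofReal (t ^ (-s)) * bestApprox m G x t) ^ q * ENNReal.ofReal t⁻¹ ≤
        (ENNReal.ofReal (t ^ (-s)) * bestApprox m F x t) ^ q * ENNReal.ofReal t⁻¹ +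
          ∑' i, b i t := by
    intro t ht
    obtain ⟨i, hi⟩ := exists_mem_Ico_dyadicRadius ht
    grw [← ENNReal.le_tsum i, hB i t hi, (ENNReal.monotone_rpow_of_nonneg hq0.le).map_max,
      max_le_add_of_nonneg zero_le zero_le, add_mul]
    simp [b, hi]
  have hslots : ∫⁻ t in Ioo (0 : ℝ) 1, ∑' i, b i t ≤ ∑' i, B i ^ q := by
    refine (setLIntegral_le_lintegral _ _).trans ?_
    rw [lintegral_tsum fun i => (hb i).aemeasurable]
    refine ENNReal.tsum_le_tsum fun i => ?_
    rw [lintegral_indicator measurableSet_Ico, lintegral_const_mul _ (by fun_prop)]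
    exact mul_le_of_le_one_right' (setLIntegral_inv_le_one i)
  calc smoothnessFn m s q G x
      ≤ (∫⁻ t in Ioo (0 : ℝ) 1,
          ((ENNReal.ofReal (t ^ (-s)) * bestApprox m F x t) ^ q * ENNReal.ofReal t⁻¹ +
            ∑' i, b i t)) ^ (1 / q) :=
        ENNReal.rpow_le_rpow (setLIntegral_mono' measurableSet_Ioo hpoint) (by positivity)
    _ ≤ smoothnessFn m s q F x + (∑' i, B i ^ q) ^ (1 / q) := by
        rw [lintegral_add_right _ (Measurable.tsum hb)]
        grw [hslots]
        exact ENNReal.rpow_add_le_add_rpow _ _ (by positivity) ((div_le_one hq0).2 hq)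
    _ ≤ smoothnessFn m s q F x + ∑' i, B i := by grw [tsum_rpow_rpow_inv_le_tsum hq]

lemma ballMean_indicator_le (Ω : Set (Rn n)) (F : Rn n → ℝ) (x : Rn n) (t : ℝ) :
    ballMean (Ω.indicator F) x t ≤ ballMean F x t := by
  simp only [ballMean_eq]
  gcongr
  exact enorm_indicator_le_enorm_self _ _

lemma subset_or_disjoint_of_disjoint_frontier {X : Type*} [TopologicalSpace X]
    {S A : Set X} (hS : IsPreconnected S) (hSA : Disjoint S (frontier A)) :
    S ⊆ A ∨ Disjoint S A := by
  have hcover : S ⊆ interior A ∪ (closure A)ᶜ := fun y hy => by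
    by_contra h
    rw [mem_union, not_or, notMem_compl_iff] at h
    exact hSA.notMem_of_mem_left hy ⟨h.2, h.1⟩
  rcases hS.subset_or_subset isOpen_interior isClosed_closure.isOpen_compl
    (disjoint_compl_right.mono_left (interior_subset.trans subset_closure)) hcover with h | h
  · exact .inl (h.trans interior_subset)
  · exact .inr (disjoint_compl_left.mono h subset_closure)

lemma bestApprox_indicator_le_of_disjoint_frontier {t : ℝ}
    (h : Disjoint (closedBall x t) (frontier Ω)) :
    bestApprox m (Ω.indicator F) x t ≤ bestApprox m F x t := by
  rcases subset_or_disjoint_of_disjoint_frontier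
    (convex_closedBall x t).isPreconnected h with hsub | hdisj
  · exact (bestApprox_congr_ae (ae_restrict_of_forall_mem measurableSet_closedBall fun y hy =>
      indicator_of_mem (hsub hy) F)).le
  · have hzero : ballMean (Ω.indicator F) x t = ballMean 0 x t :=
      ballMean_congr_ae (ae_restrict_of_forall_mem measurableSet_closedBall fun y hy =>
        indicator_of_notMem (hdisj.notMem_of_mem_left hy) F)
    grw [bestApprox_le_ballMean, hzero]
    simp [ballMean]

lemma ofReal_rpow_mul_bestApprox_le (hs : 0 ≤ s) {i : ℕ} {t : ℝ}
    (ht : t ∈ Ico (𝔯 (i + 1)) (𝔯 i)) :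
    ENNReal.ofReal (t ^ (-s)) * bestApprox m F x t ≤
      𝔴 s (i + 1) * (2 ^ n * ballMean F x (𝔯 i)) := by
  have hi := dyadicRadius_pos (i + 1)
  have ht0 : 0 < t := hi.trans_le ht.1
  have hweight : ENNReal.ofReal (t ^ (-s)) ≤ 𝔴 s (i + 1) := by
    rw [← neg_neg s, ← ofReal_dyadicRadius_rpow, neg_neg]
    exact ENNReal.ofReal_le_ofReal (Real.rpow_le_rpow_of_nonpos hi ht.1 (by linarith))
  have hmean : ballMean F x t ≤ 2 ^ n * ballMean F x (𝔯 i) := by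
    convert ballMean_mono (F := F) (x := x) (y := x) (r := 𝔯 i) (c := 2) ht0
      (by simpa using ht.2.le) (by linarith [dyadicRadius_succ i, ht.1]) using 2
    simp [ENNReal.ofReal_pow]
  grw [hweight, bestApprox_le_ballMean, hmean]

lemma smoothnessFn_indicator_le (hs : 0 ≤ s) (hq : 1 ≤ q) (Ω : Set (Rn n)) (F : Rn n → ℝ)
    (x : Rn n) :
    smoothnessFn m s q (Ω.indicator F) x ≤ smoothnessFn m s q F x +
      ∑' i, {i | x ∈ thickening (𝔯 i) (frontier Ω)}.indicator
        (fun i => 𝔴 s (i + 1) * (2 ^ n * ballMean F x (𝔯 i))) i := by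
  refine smoothnessFn_le_add_tsum hq fun i t ht => ?_
  by_cases hx : x ∈ thickening (𝔯 i) (frontier Ω)
  · refine le_max_of_le_right ?_
    rw [indicator_of_mem (by exact hx)]
    grw [ofReal_rpow_mul_bestApprox_le hs ht, ballMean_indicator_le]
  · refine le_max_of_le_left ?_
    grw [bestApprox_indicator_le_of_disjoint_frontier]
    refine disjoint_left.2 fun y hy hyΩ => hx (mem_thickening_iff.2 ⟨y, hyΩ, ?_⟩)
    exact (mem_closedBall'.1 hy).trans_lt ht.2

lemma ballMean_dyadicRadius_le_ballMean_zero {i : ℕ} (hi : i ≤ 5) (F : Rn n → ℝ) (x : Rn n) :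
    ballMean F x (𝔯 i) ≤ 32 ^ n * ballMean F x (𝔯 0) := by
  have hi' : 𝔯 5 ≤ 𝔯 i := dyadicRadius_anti hi
  convert ballMean_mono (F := F) (x := x) (y := x) (r := 𝔯 0) (c := 32) (dyadicRadius_pos i)
    (by simpa using dyadicRadius_anti i.zero_le) (by norm_num [dyadicRadius] at hi' ⊢; linarith)
    using 2
  simp [ENNReal.ofReal_pow]

lemma exists_smoothnessFn_indicator_le (hs : 0 ≤ s) (hq : 1 ≤ q) (m : ℕ) (Ω : Set (Rn n)) :
    ∃ C ≠ ∞, ∀ (F : Rn n → ℝ) x, smoothnessFn m s q (Ω.indicator F) x ≤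
      smoothnessFn m s q F x + C * (ballMean F x (𝔯 0) + nearMeanSum (frontier Ω) s F x) := by
  set c : ℝ≥0∞ := 𝔴 s 6 * 2 ^ n
  refine ⟨c * (5 * 32 ^ n + 1), by finiteness [dyadicWeight_ne_top s 6], fun F x => ?_⟩
  grw [smoothnessFn_indicator_le hs hq, ← ENNReal.summable.sum_add_tsum_nat_add' (k := 5)]
  set T := nearMeanSum (frontier Ω) s F x with hT
  have hlarge : ∑ i ∈ Finset.range 5, {i | x ∈ thickening (𝔯 i) (frontier Ω)}.indicator
      (fun i => 𝔴 s (i + 1) * (2 ^ n * ballMean F x (𝔯 i))) i ≤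
        c * (5 * 32 ^ n) * ballMean F x (𝔯 0) := by
    calc _ ≤ ∑ _i ∈ Finset.range 5, 𝔴 s 6 * (2 ^ n * (32 ^ n * ballMean F x (𝔯 0))) := by
          refine Finset.sum_le_sum fun i hi => (indicator_le_self _ _ i).trans ?_
          have hi5 := Finset.mem_range.1 hi
          grw [ballMean_dyadicRadius_le_ballMean_zero hi5.le,
            dyadicWeight_mono hs (show i + 1 ≤ 6 by omega)]
      _ = c * (5 * 32 ^ n) * ballMean F x (𝔯 0) := by
          rw [Finset.sum_const, Finset.card_range, nsmul_eq_mul]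
          push_cast
          ring
  have hsmall : ∑' i, {i | x ∈ thickening (𝔯 i) (frontier Ω)}.indicator
      (fun i => 𝔴 s (i + 1) * (2 ^ n * ballMean F x (𝔯 i))) (i + 5) = c * T := by
    rw [hT, nearMeanSum, ← ENNReal.tsum_mul_left]
    refine tsum_congr fun i => ?_
    by_cases hx : x ∈ thickening (𝔯 (i + 5)) (frontier Ω)
    · rw [indicator_of_mem (by exact hx), indicator_of_mem (by exact hx),
        show i + 5 + 1 = 6 + i by ring, dyadicWeight_add_right]
      ring
    · rw [indicator_of_notMem (by exact hx), indicator_of_notMem (by exact hx), mul_zero]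
  rw [hsmall]
  grw [hlarge]
  gcongr
  calc c * (5 * 32 ^ n) * ballMean F x (𝔯 0) + c * T
      ≤ c * (5 * 32 ^ n + 1) * ballMean F x (𝔯 0) + c * (5 * 32 ^ n + 1) * T := by
        gcongr
        · exact le_self_add
        · exact le_mul_of_one_le_right' le_add_self
    _ = c * (5 * 32 ^ n + 1) * (ballMean F x (𝔯 0) + T) := (mul_add _ _ _).symm

end IndicatorSmoothness

section IndicatorNorm

variable {n : ℕ} {Ω Γ : Set (Rn n)} {μ ν : Measure (Rn n)} {K : ℝ≥0∞} {d s p q τ : ℝ}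

lemma lintegral_ballMean_rpow_le (hp : 1 ≤ p) {F : Rn n → ℝ} (hF : Measurable F) {r : ℝ}
    (hr : 0 < r) : ∫⁻ x, ballMean F x r ^ p ≤ ∫⁻ x, ‖F x‖ₑ ^ p := by
  have hvol (x : Rn n) : volume (closedBall x r) = volume (closedBall (0 : Rn n) r) :=
    Measure.addHaar_closedBall_center _ x r
  have h := lintegral_inv_mul_setLIntegral_closedBall_rpow_le (ν := volume) (K := 1) (r := r) hp
    (measure_closedBall_pos volume (0 : Rn n) hr).ne' measure_closedBall_lt_top.ne
    (fun x => by rw [hvol, one_mul]) hF.enorm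
  simpa only [ballMean_eq, hvol, ENNReal.one_rpow, one_mul] using h

lemma exists_lintegral_nearMeanSum_rpow_le_smoothnessFn [SFinite ν] (hd : 0 < d)
    (hnd : (n : ℝ) - 1 < d) (hdn : d < n) (m : ℕ) (hp : 1 < p) (hq : 1 ≤ q) (hs : 0 ≤ s)
    (hτ₀ : 0 < τ) (hτ : s * p = τ + (n - d)) (hK : K ≠ ∞) (hμ : μ ≤ volume)
    (hthick : LowerRegularOn Γ n K μ) (hν : AhlforsRegular Γ d K ν) :
    ∃ C ≠ ∞, ∀ F : Rn n → ℝ, Measurable F → VanishesNear Γ μ F →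
      ∫⁻ x, nearMeanSum Γ s F x ^ p ≤ C * ∫⁻ x, smoothnessFn m s q F x ^ p := by
  have hn : 0 < n := by exact_mod_cast hd.trans hdn
  obtain ⟨A, hA, hnear⟩ := hν.exists_lintegral_nearMeanSum_rpow_le hdn hp hK hτ
  obtain ⟨B, hB, hboundary⟩ :=
    exists_tsum_lintegral_ballMean_rpow_le hn hd hnd m hp hτ₀ hK hμ hthick hν
  obtain ⟨C, hC, hsmooth⟩ :=
    hν.exists_tsum_lintegral_bestApprox_rpow_le hn hdn hK m (by linarith) hq hs hτ
  refine ⟨A * (B * C), by finiteness, fun F hF hvanish => ?_⟩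
  grw [hnear F hF, hboundary F hF hvanish, hsmooth F hF, mul_assoc, mul_assoc]

lemma measurable_nearMeanSum {F : Rn n → ℝ} (hF : Measurable F) :
    Measurable (nearMeanSum Γ s F) :=
  Measurable.tsum fun i => Measurable.indicator (s := thickening (𝔯 (i + 5)) Γ)
    ((measurable_ballMean_left hF _).const_mul _) isOpen_thickening.measurableSet

lemma exists_lintegral_smoothnessFn_indicator_rpow_le [SFinite ν] (hd : 0 < d)
    (hnd : (n : ℝ) - 1 < d) (hdn : d < n) (hp : 1 < p) (hq : 1 ≤ q) (hs : (n - d) / p < s)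
    (hK : K ≠ ∞) (hthick : LowerRegularOn (frontier Ω) n K (volume.restrict Ω))
    (hν : AhlforsRegular (frontier Ω) d K ν) :
    ∃ C ≠ ∞, ∀ F : Rn n → ℝ, Measurable F → VanishesNear (frontier Ω) (volume.restrict Ω) F →
      (∫⁻ x, smoothnessFn ⌊s⌋₊ s q (Ω.indicator F) x ^ p) ^ (1 / p) ≤ C * tlNorm s p q F := by
  have hp0 : 0 < p := by linarith
  have hs0 : 0 ≤ s := (div_nonneg (by linarith) hp0.le).trans hs.le
  obtain ⟨A, hA, hpoint⟩ := exists_smoothnessFn_indicator_le hs0 hq ⌊s⌋₊ Ω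
  obtain ⟨B, hB, hnear⟩ := exists_lintegral_nearMeanSum_rpow_le_smoothnessFn hd hnd hdn ⌊s⌋₊ hp hq
    hs0 (τ := s * p - (n - d)) (by rw [div_lt_iff₀ hp0] at hs; linarith) (by ring) hK
    Measure.restrict_le_self hthick hν
  refine ⟨1 + A * (1 + B ^ (1 / p)), by finiteness, fun F hF hvanish => ?_⟩
  set X := (∫⁻ x, ‖F x‖ₑ ^ p) ^ (1 / p)
  set Y := (∫⁻ x, smoothnessFn ⌊s⌋₊ s q F x ^ p) ^ (1 / p)
  have hS := measurable_smoothnessFn (m := ⌊s⌋₊) (s := s) (q := q) hF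
  have hM := measurable_ballMean_left hF (𝔯 0)
  have hT := measurable_nearMeanSum (Γ := frontier Ω) (s := s) hF
  have hMbound : (∫⁻ x, ballMean F x (𝔯 0) ^ p) ^ (1 / p) ≤ X := by
    grw [lintegral_ballMean_rpow_le hp.le hF (dyadicRadius_pos 0)]
  have hTbound : (∫⁻ x, nearMeanSum (frontier Ω) s F x ^ p) ^ (1 / p) ≤ B ^ (1 / p) * Y := by
    grw [hnear F hF hvanish, ENNReal.mul_rpow_of_nonneg _ _ (by positivity)]
  calc (∫⁻ x, smoothnessFn ⌊s⌋₊ s q (Ω.indicator F) x ^ p) ^ (1 / p)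
      ≤ (∫⁻ x, (smoothnessFn ⌊s⌋₊ s q F x +
          A * (ballMean F x (𝔯 0) + nearMeanSum (frontier Ω) s F x)) ^ p) ^ (1 / p) := by
        gcongr with x
        exact hpoint F x
    _ ≤ Y + A * (∫⁻ x, (ballMean F x (𝔯 0) + nearMeanSum (frontier Ω) s F x) ^ p) ^ (1 / p) := by
        refine (ENNReal.lintegral_Lp_add_le (by fun_prop) (by fun_prop) hp.le).trans_eq ?_
        simp_rw [ENNReal.mul_rpow_of_nonneg A _ hp0.le]
        rw [lintegral_const_mul' _ _ (by finiteness),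
          ENNReal.mul_rpow_of_nonneg _ _ (by positivity), ← ENNReal.rpow_mul,
          mul_one_div_cancel hp0.ne', ENNReal.rpow_one]
    _ ≤ Y + A * (X + B ^ (1 / p) * Y) := by
        grw [← hMbound, ← hTbound]
        gcongr
        exact ENNReal.lintegral_Lp_add_le (by fun_prop) (by fun_prop) hp.le
    _ ≤ (1 + A * (1 + B ^ (1 / p))) * (X + Y) := by
        calc Y + A * (X + B ^ (1 / p) * Y)
            ≤ Y + A * (X + B ^ (1 / p) * Y) + (X + A * Y + A * B ^ (1 / p) * X) := le_self_add
          _ = (1 + A * (1 + B ^ (1 / p))) * (X + Y) := by ring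
    _ = (1 + A * (1 + B ^ (1 / p))) * tlNorm s p q F := by rw [tlNorm_eq]

lemma exists_tlNorm_indicator_le [SFinite ν] (hd : 0 < d) (hnd : (n : ℝ) - 1 < d) (hdn : d < n)
    (hp : 1 < p) (hq : 1 ≤ q) (hs : (n - d) / p < s) (hK : K ≠ ∞)
    (hthick : LowerRegularOn (frontier Ω) n K (volume.restrict Ω))
    (hν : AhlforsRegular (frontier Ω) d K ν) :
    ∃ C ≠ ∞, ∀ F : Rn n → ℝ, Measurable F → VanishesNear (frontier Ω) (volume.restrict Ω) F →
      tlNorm s p q (Ω.indicator F) ≤ C * tlNorm s p q F := by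
  obtain ⟨C, hC, hsmooth⟩ :=
    exists_lintegral_smoothnessFn_indicator_rpow_le hd hnd hdn hp hq hs hK hthick hν
  refine ⟨1 + C, by finiteness, fun F hF hvanish => ?_⟩
  calc tlNorm s p q (Ω.indicator F) ≤ tlNorm s p q F + C * tlNorm s p q F := by
        rw [tlNorm_eq s p q (Ω.indicator F)]
        gcongr
        · rw [tlNorm_eq]
          refine le_add_right ?_
          gcongr
          exact enorm_indicator_le_enorm_self _ _
        · exact hsmooth F hF hvanish
    _ = (1 + C) * tlNorm s p q F := by rw [add_mul, one_mul]

end IndicatorNorm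

section DSets

variable {X : Type*} [PseudoMetricSpace X] [MeasurableSpace X] {S Γ : Set X} {μ ν : Measure X}
  {K K' : ℝ≥0∞} {d ρ : ℝ}

lemma LowerRegularOn.mono (h : LowerRegularOn S d K μ) (hK : K ≤ K') : LowerRegularOn S d K' μ :=
  fun w hw r hr₀ hr₁ => by grw [h w hw r hr₀ hr₁, hK]

lemma AhlforsRegular.mono (h : AhlforsRegular Γ d K ν) (hK : K ≤ K') : AhlforsRegular Γ d K' ν where
  upper x r hr₀ hr₁ := by grw [h.upper x r hr₀ hr₁, hK]
  lower := h.lower.mono hK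
  ae_mem := h.ae_mem

lemma UpperRegular.isLocallyFiniteMeasure (h : UpperRegular d K ρ μ) (hK : K ≠ ∞) (hρ : 0 < ρ) :
    IsLocallyFiniteMeasure μ :=
  ⟨fun x => ⟨closedBall x ρ, closedBall_mem_nhds x hρ,
    (h x ρ hρ le_rfl).trans_lt (by finiteness)⟩⟩

variable {n : ℕ} {S Ω : Set (Rn n)} {C : ℝ}

lemma hausdorffMeasure_eq_volume : (μH[n] : Measure (Rn n)) = volume := by
  simpa using hausdorffMeasure_pi_real (ι := Fin n)

lemma IsDSet.rpow_le_mul_hausdorffMeasure (h : IsDSet S d C) {w : Rn n} (hw : w ∈ S) {r : ℝ}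
    (hr₀ : 0 < r) (hr₁ : r ≤ 1) :
    ENNReal.ofReal (r ^ d) ≤ ENNReal.ofReal C * μH[d] (closedBall w r ∩ S) := by
  have hC : 0 < C := one_pos.trans h.2.1
  have hlower := (h.2.2 w hw r hr₀ hr₁).1
  rwa [ENNReal.ofReal_mul (by positivity), ENNReal.ofReal_inv_of_pos hC,
    ENNReal.inv_mul_le_iff (by simpa using hC) (by finiteness)] at hlower

lemma IsDSet.upperRegular (h : IsDSet S d C) :
    UpperRegular d (ENNReal.ofReal (C * 2 ^ d)) (1 / 2) (μH[d].restrict S) := by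
  intro x r hr₀ hr₁
  rw [Measure.restrict_apply measurableSet_closedBall]
  rcases (closedBall x r ∩ S).eq_empty_or_nonempty with hempty | ⟨w, hwx, hwS⟩
  · simp [hempty]
  · have hC : 0 < C := one_pos.trans h.2.1
    have hsub : closedBall x r ⊆ closedBall w (2 * r) :=
      closedBall_subset_closedBall' (by linarith [mem_closedBall'.1 hwx])
    calc μH[d] (closedBall x r ∩ S) ≤ μH[d] (closedBall w (2 * r) ∩ S) := by gcongr
      _ ≤ ENNReal.ofReal (C * (2 * r) ^ d) := (h.2.2 w hwS _ (by linarith) (by linarith)).2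
      _ = ENNReal.ofReal (C * 2 ^ d) * ENNReal.ofReal (r ^ d) := by
        rw [Real.mul_rpow zero_le_two hr₀.le, ← mul_assoc, ENNReal.ofReal_mul (by positivity)]

lemma IsDSet.ahlforsRegular (hd : 0 ≤ d) (h : IsDSet S d C) :
    AhlforsRegular S d (ENNReal.ofReal (C * 2 ^ d)) (μH[d].restrict S) where
  upper := h.upperRegular
  lower w hw r hr₀ hr₁ := by
    have hC : C ≤ C * 2 ^ d :=
      le_mul_of_one_le_right (one_pos.trans h.2.1).le (Real.one_le_rpow one_le_two hd)
    rw [Measure.restrict_apply measurableSet_closedBall]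
    grw [h.rpow_le_mul_hausdorffMeasure hw hr₀ hr₁, hC]
  ae_mem := ae_restrict_mem h.1.measurableSet

lemma IsDSet.isLocallyFiniteMeasure (h : IsDSet S d C) :
    IsLocallyFiniteMeasure (μH[d].restrict S) :=
  h.upperRegular.isLocallyFiniteMeasure ENNReal.ofReal_ne_top one_half_pos

lemma IsDSet.volume_eq_zero (h : IsDSet S d C) (hdn : d < n) : volume S = 0 := by
  have := h.isLocallyFiniteMeasure
  refine measure_null_of_locally_null S fun x _ =>
    ⟨closedBall x 1 ∩ S, inter_mem (mem_nhdsWithin_of_mem_nhds (closedBall_mem_nhds x one_pos))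
      self_mem_nhdsWithin, ?_⟩
  rw [← hausdorffMeasure_eq_volume]
  refine (Measure.hausdorffMeasure_zero_or_top hdn _).resolve_right ?_
  rw [← Measure.restrict_apply measurableSet_closedBall]
  exact (isCompact_closedBall x 1).measure_ne_top

lemma IsDSet.lowerRegularOn_frontier (h : IsDSet (closure Ω) n C)
    (hnull : volume (frontier Ω) = 0) :
    LowerRegularOn (frontier Ω) n (ENNReal.ofReal C) (volume.restrict Ω) := by
  intro w hw r hr₀ hr₁
  have hclosure : closure Ω =ᵐ[volume] Ω := by
    rw [closure_eq_self_union_frontier]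
    exact union_ae_eq_left_of_ae_eq_empty (ae_eq_empty.2 hnull)
  rw [← Measure.restrict_congr_set hclosure, Measure.restrict_apply measurableSet_closedBall,
    ← hausdorffMeasure_eq_volume]
  exact h.rpow_le_mul_hausdorffMeasure (frontier_subset_closure hw) hr₀ hr₁

end DSets

section CompactlySupported

lemma vanishesNear_of_hasCompactSupport {X : Type*} [PseudoMetricSpace X] [MeasurableSpace X]
    {Γ : Set X} {μ : Measure X} {φ F : X → ℝ} (hΓ : IsClosed Γ) (hφ : HasCompactSupport φ)
    (hdisjoint : Disjoint (tsupport φ) Γ) (hF : ∀ᵐ x ∂μ, F x = φ x) : VanishesNear Γ μ F := by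
  obtain ⟨r, hr, hthick⟩ := hdisjoint.exists_cthickenings hφ hΓ
  refine ⟨r, hr, fun w hw => ?_⟩
  filter_upwards [hF] with x hx hxw
  rw [hx]
  exact image_eq_zero_of_notMem_tsupport fun hmem => hthick.notMem_of_mem_left
    (self_subset_cthickening _ hmem) (mem_cthickening_of_dist_le x w r Γ hw hxw)

variable {n : ℕ} {Ω : Set (Rn n)} {s p q : ℝ} {C : ℝ≥0∞} {f φ : Rn n → ℝ}

lemma tlNorm_le_mul_tlNormOn (hΩ : IsOpen Ω) (hC₀ : C ≠ 0) (hC : C ≠ ∞)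
    (hindicator : ∀ F : Rn n → ℝ, Measurable F → VanishesNear (frontier Ω) (volume.restrict Ω) F →
      tlNorm s p q (Ω.indicator F) ≤ C * tlNorm s p q F)
    (hφ : HasCompactSupport φ) (hsupport : tsupport φ ⊆ Ω) :
    tlNorm s p q φ ≤ C * tlNormOn Ω s p q φ := by
  simp only [tlNormOn, ENNReal.mul_iInf_of_ne hC₀ hC]
  refine le_iInf₂ fun F hF => le_iInf fun hFφ => ?_
  have hvanish : VanishesNear (frontier Ω) (volume.restrict Ω) F :=
    vanishesNear_of_hasCompactSupport isClosed_frontier hφ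
      ((disjoint_iff_inter_eq_empty.2 hΩ.inter_frontier_eq).mono_left hsupport) hFφ
  have heq : ∀ᵐ x, φ x = Ω.indicator F x := by
    filter_upwards [ae_imp_of_ae_restrict hFφ] with x hx
    by_cases hxΩ : x ∈ Ω
    · rw [indicator_of_mem hxΩ, hx hxΩ]
    · rw [indicator_of_notMem hxΩ, image_eq_zero_of_notMem_tsupport fun h => hxΩ (hsupport h)]
  rw [tlNorm_congr_ae heq]
  exact hindicator F hF hvanish

lemma lintegral_indicator_sub_rpow_le_tlNormOn (hΩ : MeasurableSet Ω) (hp : 0 < p)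
    (hφ : ∀ x ∉ Ω, φ x = 0) :
    ∫⁻ x, ‖Ω.indicator f x - φ x‖ₑ ^ p ≤ tlNormOn Ω s p q (f - φ) ^ p := by
  have hindicator (x : Rn n) : ‖Ω.indicator f x - φ x‖ₑ ^ p =
      Ω.indicator (fun y => ‖(f - φ) y‖ₑ ^ p) x := by
    by_cases hx : x ∈ Ω
    · simp [hx]
    · simp [hx, hφ x hx, hp]
  simp_rw [hindicator, lintegral_indicator hΩ]
  rw [← ENNReal.rpow_inv_le_iff hp, ← one_div]
  exact setLIntegral_rpow_le_tlNormOn hp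

lemma tlNorm_indicator_le_of_tendsto (hΩ : MeasurableSet Ω) (hp : 1 ≤ p) (hq : 1 ≤ q) (hC : C ≠ ∞)
    {φ : ℕ → Rn n → ℝ} (hf : Measurable f) (hφ : ∀ j, Measurable (φ j))
    (hφΩ : ∀ j, ∀ x ∉ Ω, φ j x = 0) (hbound : ∀ j, tlNorm s p q (φ j) ≤ C * tlNormOn Ω s p q (φ j))
    (hlim : Tendsto (fun j => tlNormOn Ω s p q (f - φ j)) atTop (𝓝 0)) :
    tlNorm s p q (Ω.indicator f) ≤ C * tlNormOn Ω s p q f := by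
  have hp0 : 0 < p := one_pos.trans_le hp
  have hlim_Lp : Tendsto (fun j => ∫⁻ x, ‖Ω.indicator f x - φ j x‖ₑ ^ p) atTop (𝓝 0) := by
    have hpow := hlim.ennrpow_const p
    rw [ENNReal.zero_rpow_of_pos hp0] at hpow
    exact tendsto_of_tendsto_of_tendsto_of_le_of_le tendsto_const_nhds hpow (fun _ => zero_le)
      fun j => lintegral_indicator_sub_rpow_le_tlNormOn hΩ hp0 (hφΩ j)
  have hlim_bound : Tendsto (fun j => C * (tlNormOn Ω s p q f + tlNormOn Ω s p q (f - φ j))) atTop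
      (𝓝 (C * tlNormOn Ω s p q f)) := by
    simpa using ENNReal.Tendsto.const_mul (tendsto_const_nhds.add hlim) (Or.inr hC)
  calc tlNorm s p q (Ω.indicator f)
      ≤ liminf (fun j => tlNorm s p q (φ j)) atTop :=
        tlNorm_le_liminf hp (by linarith) (hf.indicator hΩ) hφ hlim_Lp
    _ ≤ liminf (fun j => C * (tlNormOn Ω s p q f + tlNormOn Ω s p q (f - φ j))) atTop := by
        refine liminf_le_liminf (Eventually.of_forall fun j => ?_)
        grw [hbound j, tlNormOn_le_add_tlNormOn_sub hp hq]
    _ = C * tlNormOn Ω s p q f := hlim_bound.liminf_eq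

end CompactlySupported

theorem closure_subset_tilde_general {n : ℕ} {Ω : Set (Rn n)} (hΩ : IsOpen Ω) {d Cn Cd : ℝ}
    (hclosure : IsDSet (closure Ω) (n : ℝ) Cn) (hfrontier : IsDSet (frontier Ω) d Cd) (hd : 0 < d)
    (hnd : (n : ℝ) - 1 < d) (hdn : d < n) {p q s : ℝ} (hp : 1 < p) (hq : 1 ≤ q)
    (hs : ((n : ℝ) - d) / p < s) :
    ∃ C > 0, ∀ f : Rn n → ℝ, Measurable f →
      (∃ φ : ℕ → Rn n → ℝ,
        (∀ j, Measurable (φ j) ∧ HasCompactSupport (φ j) ∧ tsupport (φ j) ⊆ Ω) ∧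
        Tendsto (fun j => tlNormOn Ω s p q (fun x => f x - φ j x)) atTop (𝓝 0)) →
      tlNorm s p q (Ω.indicator f) ≤ ENNReal.ofReal C * tlNormOn Ω s p q f := by
  have := hfrontier.isLocallyFiniteMeasure
  have hthick := hclosure.lowerRegularOn_frontier (hfrontier.volume_eq_zero hdn)
  obtain ⟨C, hC, hindicator⟩ := exists_tlNorm_indicator_le hd hnd hdn hp hq hs
    (K := max (ENNReal.ofReal Cn) (ENNReal.ofReal (Cd * 2 ^ d))) (by finiteness)
    (hthick.mono (le_max_left _ _)) ((hfrontier.ahlforsRegular hd.le).mono (le_max_right _ _))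
  refine ⟨C.toReal + 1, by positivity, fun f hf ⟨φ, hφ, hlim⟩ => ?_⟩
  refine tlNorm_indicator_le_of_tendsto hΩ.measurableSet hp.le hq ENNReal.ofReal_ne_top hf
    (fun j => (hφ j).1)
    (fun j x hx => image_eq_zero_of_notMem_tsupport fun h => hx ((hφ j).2.2 h)) (fun j => ?_) hlim
  refine tlNorm_le_mul_tlNormOn hΩ (by positivity) ENNReal.ofReal_ne_top (fun F hF hvanish => ?_)
    (hφ j).2.1 (hφ j).2.2
  grw [hindicator F hF hvanish, ENNReal.ofReal_add ENNReal.toReal_nonneg zero_le_one,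
    ENNReal.ofReal_toReal hC, ← le_self_add (a := C)]

/-- **`∘F^s_{pq}(Ω) ⊆ F̃^s_{pq}(Ω)`** (Theorem 4.5). Let `Ω ⊆ ℝⁿ` (`n ≥ 2`) be a domain
whose closure is an `n`-set and whose boundary is a `d`-set with `n−1 < d < n`, and let
`1 < p < ∞`, `1 ≤ q < ∞`, `s > (n−d)/p`. Then there is `C > 0` such that: every
`f ∈ L^p(Ω)` that can be approximated in `F^s_{pq}(Ω)` by functions in `C_c^∞(Ω)`
admits an extension `g ∈ F^s_{pq}(ℝⁿ)` with `g = f` a.e. on `Ω`, `g = 0` a.e. outside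
`closure Ω`, and `‖g‖_{F^s_{pq}(ℝⁿ)} ≤ C ‖f‖_{F^s_{pq}(Ω)}`. -/
theorem closure_subset_tilde {n : ℕ} (hn : 2 ≤ n) (Ω : Set (Rn n))
    (hΩo : IsOpen Ω) (hΩc : IsConnected Ω) (d Cn Cd : ℝ)
    (hcl : IsDSet (closure Ω) (n : ℝ) Cn) (hbd : IsDSet (frontier Ω) d Cd)
    (hd1 : (n : ℝ) - 1 < d) (hd2 : d < n)
    (p q s : ℝ) (hp : 1 < p) (hq : 1 ≤ q) (hs : ((n : ℝ) - d) / p < s) :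
    ∃ C > 0, ∀ f : Rn n → ℝ, Measurable f →
      (∫⁻ x in Ω, ENNReal.ofReal |f x| ^ p) < ⊤ →
      (∃ φ : ℕ → Rn n → ℝ,
        (∀ j, ContDiff ℝ (⊤ : ℕ∞) (φ j) ∧ HasCompactSupport (φ j) ∧ tsupport (φ j) ⊆ Ω) ∧
        Tendsto (fun j => tlNormOn Ω s p q (fun x => f x - φ j x)) atTop (𝓝 0)) →
      ∃ g : Rn n → ℝ, Measurable g ∧ (∀ᵐ x ∂volume.restrict Ω, g x = f x) ∧
        (∀ᵐ x ∂volume, x ∉ closure Ω → g x = 0) ∧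
        tlNorm s p q g ≤ ENNReal.ofReal C * tlNormOn Ω s p q f := by
  have hn' : (2 : ℝ) ≤ n := by exact_mod_cast hn
  obtain ⟨C, hC, hbound⟩ :=
    closure_subset_tilde_general hΩo hcl hbd (by linarith) hd1 hd2 hp hq hs
  refine ⟨C, hC, fun f hf _ ⟨φ, hφ, hlim⟩ => ⟨Ω.indicator f, hf.indicator hΩo.measurableSet,
    indicator_ae_eq_restrict hΩo.measurableSet, ae_of_all _ fun x hx =>
      indicator_of_notMem (fun h => hx (subset_closure h)) f, hbound f hf ⟨φ, fun j =>
        ⟨(hφ j).1.continuous.measurable, (hφ j).2⟩, hlim⟩⟩⟩
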